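/- Let (H, α) be a monoidal Hom-bialgebra and (A, β) simultaneously a monoidal Hom-algebra and a monoidal Hom-coalgebra. Suppose (H, α) weakly acts on (A, β) (i.e. h·(ab) = (h₁·a)(h₂·b) and h·1_A = ε(h)1_A), (A, β) is a left (H, α)-Hom-comodule coalgebra with coaction ρ(a) = a₍₋₁₎ ⊗ a₍₀₎, the (m,k)-Hom-crossed product (A ♯_σ H, β ⊗ α) is a monoidal Hom-algebra with σ a twisted comodule cocycle, and (A ⋊ H, β ⊗ α) is the m-Hom-smash coproduct monoidal Hom-coalgebra. Then A ⊗ H equipped with the crossed-product multiplication, unit 1_A ⊗ 1_H, the smash-coproduct comultiplication and counit, and structure map β ⊗ α, is a monoidal Hom-bialgebra if and only if all of the following hold for all a, b ∈ A and h, g ∈ H: (A1) ε_A(ab) = ε_A(a)ε_A(b) and ε_A(1_A) = 1; (A2) ε_A(h·a) = ε_H(h)ε_A(a); (A3) Δ_A(σ(h, g)) = σ(h₁, g₁) ⊗ σ(h₂, g₂) and ε_A(σ(h, g)) = ε(h)ε(g); (A4) Δ_A(1_A) = 1_A ⊗ 1_A; (A5) (ab)₍₋₁₎ ⊗ (ab)₍₀₎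 = a₍₋₁₎b₍₋₁₎ ⊗ a₍₀₎b₍₀₎ and ρ(1_A) = 1_H ⊗ 1_A; (A6) α^{m−1}(σ(α^{k+2}(h₁), α^{k+2}(g₁))₍₋₁₎) α⁻¹(h₂g₂) ⊗ σ(α^{k+2}(h₁), α^{k+2}(g₁))₍₀₎ = h₁g₁ ⊗ σ(α^{k+1}(h₂), α^{k+1}(g₂)); (A7) Δ_A(ab) = a₁[(α^{2m}(a₂₍₋₁₎₁)·β⁻²(b₁)) σ(α^{k+m+1}(a₂₍₋₁₎₂), α^{k+m}(b₂₍₋₁₎))] ⊗ β(a₂₍₀₎ b₂₍₀₎); (A8) Δ_A(α^m(h)·b) = (α^m(h₁₁)·β⁻¹(b₁)) σ(α^{k+1}(h₁₂), α^{k+m+1}(b₂₍₋₁₎)) ⊗ α^m(h₂)·β(b₂₍₀₎); (A9) α^{m−1}((α^{m+1}(h₁)·b)₍₋₁₎) h₂ ⊗ (α^{m+1}(h₁)·b)₍₀₎ = h₁α^m(b₍₋₁₎) ⊗ α^m(h₂)·b₍₀₎. -/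

import Mathlib

open TensorProduct

noncomputable section

/-- A monoidal Hom-algebra `(A, β)`. -/
structure HomAlgebraStr (K : Type*) (A : Type*) [Field K] [AddCommGroup A] [Module K A] where
  mul : A →ₗ[K] A →ₗ[K] A
  one : A
  str : A ≃ₗ[K] A
  hom_assoc : ∀ a b c : A, mul (str a) (mul b c) = mul (mul a b) (str c)
  str_mul : ∀ a b : A, str (mul a b) = mul (str a) (str b)
  mul_one : ∀ a : A, mul a one = str a
  one_mul : ∀ a : A, mul one a = str a
  str_one : str one = one

/-- A monoidal Hom-coalgebra `(C, γ)`. -/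
structure HomCoalgebraStr (K : Type*) (C : Type*) [Field K] [AddCommGroup C] [Module K C] where
  comul : C →ₗ[K] C ⊗[K] C
  counit : C →ₗ[K] K
  str : C ≃ₗ[K] C
  hom_coassoc : ∀ c : C,
    TensorProduct.map str.symm.toLinearMap comul (comul c)
      = TensorProduct.assoc K C C C (TensorProduct.map comul str.symm.toLinearMap (comul c))
  comul_str : ∀ c : C, comul (str c) = TensorProduct.map str.toLinearMap str.toLinearMap (comul c)
  counit_comul_left : ∀ c : C,
    TensorProduct.lid K C (TensorProduct.map counit (LinearMap.id : C →ₗ[K] C) (comul c)) = str.symm c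
  counit_comul_right : ∀ c : C,
    TensorProduct.rid K C (TensorProduct.map (LinearMap.id : C →ₗ[K] C) counit (comul c)) = str.symm c
  counit_str : ∀ c : C, counit (str c) = counit c

/-- The componentwise multiplication on `N ⊗ N` induced by a bilinear multiplication on `N`. -/
def tensorSquareMul {K N : Type*} [Field K] [AddCommGroup N] [Module K N]
    (mul : N →ₗ[K] N →ₗ[K] N) :
    (N ⊗[K] N) →ₗ[K] (N ⊗[K] N) →ₗ[K] (N ⊗[K] N) :=
  TensorProduct.curry
    ((TensorProduct.map (TensorProduct.lift mul) (TensorProduct.lift mul)) ∘ₗ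
      (TensorProduct.tensorTensorTensorComm K N N N N).toLinearMap)

/-- A monoidal Hom-bialgebra `(H, α)`. -/
structure HomBialgebraStr (K : Type*) (H : Type*) [Field K] [AddCommGroup H] [Module K H]
    extends HomAlgebraStr K H where
  comul : H →ₗ[K] H ⊗[K] H
  counit : H →ₗ[K] K
  hom_coassoc : ∀ c : H,
    TensorProduct.map str.symm.toLinearMap comul (comul c)
      = TensorProduct.assoc K H H H (TensorProduct.map comul str.symm.toLinearMap (comul c))
  comul_str : ∀ c : H, comul (str c) = TensorProduct.map str.toLinearMap str.toLinearMap (comul c)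
  counit_comul_left : ∀ c : H,
    TensorProduct.lid K H (TensorProduct.map counit (LinearMap.id : H →ₗ[K] H) (comul c)) = str.symm c
  counit_comul_right : ∀ c : H,
    TensorProduct.rid K H (TensorProduct.map (LinearMap.id : H →ₗ[K] H) counit (comul c)) = str.symm c
  counit_str : ∀ c : H, counit (str c) = counit c
  comul_mul : ∀ a b : H, comul (mul a b) = tensorSquareMul mul (comul a) (comul b)
  comul_one : comul one = one ⊗ₜ[K] one
  counit_mul : ∀ a b : H, counit (mul a b) = counit a * counit b
  counit_one : counit one = 1

/-- A monoidal Hom-Hopf algebra `(H, α, S)`. -/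
structure HomHopfStr (K : Type*) (H : Type*) [Field K] [AddCommGroup H] [Module K H]
    extends HomBialgebraStr K H where
  antipode : H →ₗ[K] H
  antipode_str : ∀ h : H, antipode (str h) = str (antipode h)
  antipode_mul_left : ∀ h : H,
    TensorProduct.lift (mul ∘ₗ antipode) (comul h) = counit h • one
  antipode_mul_right : ∀ h : H,
    TensorProduct.lift (mul.compl₂ antipode) (comul h) = counit h • one

section Defs

variable {K H A C M : Type*} [Field K]
variable [AddCommGroup H] [Module K H] [AddCommGroup A] [Module K A]
variable [AddCommGroup C] [Module K C] [AddCommGroup M] [Module K M]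

/-- `(A, β)` is a left weak `(H, α)`-Hom-module algebra via `act`:
`h·(ab) = (h₁·a)(h₂·b)` and `h·1 = ε(h)1`. -/
structure IsWeakModuleAlgebra (HB : HomBialgebraStr K H) (AA : HomAlgebraStr K A)
    (act : H →ₗ[K] A →ₗ[K] A) : Prop where
  act_mul : ∀ (h : H) (a b : A),
    act h (AA.mul a b)
      = TensorProduct.lift AA.mul
          (TensorProduct.map (TensorProduct.lift act) (TensorProduct.lift act)
            (TensorProduct.map ((TensorProduct.mk K H A).flip a) ((TensorProduct.mk K H A).flip b)
              (HB.comul h)))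
  act_one : ∀ h : H, act h AA.one = HB.counit h • AA.one

/-- `(C, β)` is a left `(H, α)`-Hom-comodule coalgebra via `coact a = a₍₋₁₎ ⊗ a₍₀₎`. -/
structure IsComoduleCoalgebra (HB : HomBialgebraStr K H) (CC : HomCoalgebraStr K C)
    (coact : C →ₗ[K] H ⊗[K] C) : Prop where
  comodule_coassoc : ∀ c : C,
    TensorProduct.assoc K H H C
        (TensorProduct.map HB.comul CC.str.symm.toLinearMap (coact c))
      = TensorProduct.map HB.str.symm.toLinearMap coact (coact c)
  coact_str : ∀ c : C,
    coact (CC.str c) = TensorProduct.map HB.str.toLinearMap CC.str.toLinearMap (coact c)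
  counit_coact : ∀ c : C,
    TensorProduct.lid K C (TensorProduct.map HB.counit (LinearMap.id : C →ₗ[K] C) (coact c))
      = CC.str.symm c
  coact_comul : ∀ c : C,
    TensorProduct.map (LinearMap.id : H →ₗ[K] H) CC.comul (coact c)
      = TensorProduct.map (TensorProduct.lift HB.mul) (LinearMap.id : C ⊗[K] C →ₗ[K] C ⊗[K] C)
          (TensorProduct.tensorTensorTensorComm K H C H C
            (TensorProduct.map coact coact (CC.comul c)))
  counit_coact_one : ∀ c : C,
    TensorProduct.rid K H (TensorProduct.map (LinearMap.id : H →ₗ[K] H) CC.counit (coact c))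
      = CC.counit c • HB.one

/-- The `(m,k)`-Hom-crossed product multiplication on simple tensors:
`(a ♯ h)(b ♯ g) = a[(α^m(h₁₁)·β⁻²(b)) σ(α^{k+1}(h₁₂), α^k(g₁))] ♯ α(h₂g₂)`. -/
def cpMulElem (HB : HomBialgebraStr K H) (AA : HomAlgebraStr K A)
    (act : H →ₗ[K] A →ₗ[K] A) (σ : H →ₗ[K] H →ₗ[K] A) (m k : ℤ)
    (a : A) (h : H) (b : A) (g : H) : A ⊗[K] H :=
  TensorProduct.map
    ((AA.mul a) ∘ₗ TensorProduct.lift AA.mul ∘ₗ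
      TensorProduct.map
        ((act.flip ((AA.str ^ (-2 : ℤ)) b)) ∘ₗ (HB.str ^ m).toLinearMap)
        (TensorProduct.lift σ ∘ₗ
          TensorProduct.map (HB.str ^ (k+1)).toLinearMap (HB.str ^ k).toLinearMap) ∘ₗ
      (TensorProduct.assoc K H H H).toLinearMap)
    (HB.str.toLinearMap ∘ₗ TensorProduct.lift HB.mul)
    (TensorProduct.map (TensorProduct.map HB.comul (LinearMap.id : H →ₗ[K] H))
      (LinearMap.id : H ⊗[K] H →ₗ[K] H ⊗[K] H)
      (TensorProduct.tensorTensorTensorComm K H H H H (HB.comul h ⊗ₜ[K] HB.comul g)))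

/-- The `m`-Hom-smash product multiplication on simple tensors:
`(a ♯ h)(b ♯ g) = a(α^m(h₁)·β⁻¹(b)) ♯ α(h₂)g`. -/
def smashMulElem (HB : HomBialgebraStr K H) (AA : HomAlgebraStr K A)
    (act : H →ₗ[K] A →ₗ[K] A) (m : ℤ) (a : A) (h : H) (b : A) (g : H) : A ⊗[K] H :=
  TensorProduct.map
    ((AA.mul a) ∘ₗ (act.flip ((AA.str ^ (-1 : ℤ)) b)) ∘ₗ (HB.str ^ m).toLinearMap)
    ((HB.mul.flip g) ∘ₗ HB.str.toLinearMap)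
    (HB.comul h)

/-- The `m`-Hom-smash coproduct comultiplication on simple tensors:
`Δ(a ⋊ h) = (a₁ ⋊ α^m(a₂₍₋₁₎)α⁻¹(h₁)) ⊗ (β(a₂₍₀₎) ⋊ h₂)`. -/
def scComulElem (HB : HomBialgebraStr K H) (AC : HomCoalgebraStr K A)
    (coact : A →ₗ[K] H ⊗[K] A) (m : ℤ) (a : A) (h : H) :
    (A ⊗[K] H) ⊗[K] (A ⊗[K] H) :=
  TensorProduct.map
    (TensorProduct.map (LinearMap.id : A →ₗ[K] A)
        (TensorProduct.lift HB.mul ∘ₗ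
          TensorProduct.map (HB.str ^ m).toLinearMap (HB.str ^ (-1 : ℤ)).toLinearMap) ∘ₗ
      (TensorProduct.assoc K A H H).toLinearMap)
    (TensorProduct.map AC.str.toLinearMap (LinearMap.id : H →ₗ[K] H))
    (TensorProduct.tensorTensorTensorComm K (A ⊗[K] H) A H H
      ((TensorProduct.assoc K A H A).symm
          (TensorProduct.map (LinearMap.id : A →ₗ[K] A) coact (AC.comul a)) ⊗ₜ[K] HB.comul h))

/-- Condition (1) of Theorem 2.3. -/
def CPCond1 (HB : HomBialgebraStr K H) (AA : HomAlgebraStr K A)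
    (σ : H →ₗ[K] H →ₗ[K] A) : Prop :=
  (∀ h : H, σ h HB.one = HB.counit h • AA.one) ∧
  (∀ h : H, σ HB.one h = HB.counit h • AA.one) ∧
  (∀ h g : H, σ (HB.str h) (HB.str g) = AA.str (σ h g))

/-- Condition (2) of Theorem 2.3:
`[α^m(h₁l₁)·a] σ(α^{k+2}(h₂), α^{k+2}(l₂)) = σ(α^{k+2}(h₁), α^{k+2}(l₁)) [α^m(h₂l₂)·a]`. -/
def CPCond2 (HB : HomBialgebraStr K H) (AA : HomAlgebraStr K A)
    (act : H →ₗ[K] A →ₗ[K] A) (σ : H →ₗ[K] H →ₗ[K] A) (m k : ℤ) : Prop :=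
  ∀ (h l : H) (a : A),
    TensorProduct.lift AA.mul
      (TensorProduct.map
        ((act.flip a) ∘ₗ (HB.str ^ m).toLinearMap ∘ₗ TensorProduct.lift HB.mul)
        (TensorProduct.lift σ ∘ₗ
          TensorProduct.map (HB.str ^ (k+2)).toLinearMap (HB.str ^ (k+2)).toLinearMap)
        (TensorProduct.tensorTensorTensorComm K H H H H (HB.comul h ⊗ₜ[K] HB.comul l)))
    =
    TensorProduct.lift AA.mul
      (TensorProduct.map
        (TensorProduct.lift σ ∘ₗ
          TensorProduct.map (HB.str ^ (k+2)).toLinearMap (HB.str ^ (k+2)).toLinearMap)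
        ((act.flip a) ∘ₗ (HB.str ^ m).toLinearMap ∘ₗ TensorProduct.lift HB.mul)
        (TensorProduct.tensorTensorTensorComm K H H H H (HB.comul h ⊗ₜ[K] HB.comul l)))

/-- Condition (3) of Theorem 2.3:
`[α^{m+1}(h₁)·σ(α^{k+1}(l₁), α^{k+1}(g₁))] σ(α^{k+2}(h₂), α^{k+1}(l₂g₂))
  = σ(α^{k+2}(h₁), α^{k+2}(l₁)) σ(α^{k+1}(h₂l₂), α^{k+1}(g))`. -/
def CPCond3 (HB : HomBialgebraStr K H) (AA : HomAlgebraStr K A)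
    (act : H →ₗ[K] A →ₗ[K] A) (σ : H →ₗ[K] H →ₗ[K] A) (m k : ℤ) : Prop :=
  ∀ h l g : H,
    TensorProduct.lift AA.mul
      (TensorProduct.map
        (TensorProduct.lift act ∘ₗ
          TensorProduct.map (HB.str ^ (m+1)).toLinearMap
            (TensorProduct.lift σ ∘ₗ
              TensorProduct.map (HB.str ^ (k+1)).toLinearMap (HB.str ^ (k+1)).toLinearMap))
        (TensorProduct.lift σ ∘ₗ
          TensorProduct.map (HB.str ^ (k+2)).toLinearMap
            ((HB.str ^ (k+1)).toLinearMap ∘ₗ TensorProduct.lift HB.mul))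
        (TensorProduct.tensorTensorTensorComm K H H (H ⊗[K] H) (H ⊗[K] H)
          (HB.comul h ⊗ₜ[K]
            (TensorProduct.tensorTensorTensorComm K H H H H (HB.comul l ⊗ₜ[K] HB.comul g)))))
    =
    TensorProduct.lift AA.mul
      (TensorProduct.map
        (TensorProduct.lift σ ∘ₗ
          TensorProduct.map (HB.str ^ (k+2)).toLinearMap (HB.str ^ (k+2)).toLinearMap)
        ((σ.flip ((HB.str ^ (k+1)) g)) ∘ₗ (HB.str ^ (k+1)).toLinearMap ∘ₗ TensorProduct.lift HB.mul)
        (TensorProduct.tensorTensorTensorComm K H H H H (HB.comul h ⊗ₜ[K] HB.comul l)))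

/-- `σ` is a twisted comodule cocycle:
`β(a₁) ⊗ α^{m+1}(a₂₍₋₁₎)g ⊗ a₂₍₀₎
  = a₁σ(α^{k+m+2}(a₂₍₋₁₎₁), α^{k+1}(g₁)) ⊗ α^{m+2}(a₂₍₋₁₎₂)α(g₂) ⊗ a₂₍₀₎`. -/
def IsTwistedCocycle (HB : HomBialgebraStr K H) (AA : HomAlgebraStr K A)
    (AC : HomCoalgebraStr K A) (coact : A →ₗ[K] H ⊗[K] A)
    (σ : H →ₗ[K] H →ₗ[K] A) (m k : ℤ) : Prop :=
  ∀ (a : A) (g : H),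
    (TensorProduct.assoc K A H A).symm
      (TensorProduct.map AA.str.toLinearMap
        (TensorProduct.map ((HB.mul.flip g) ∘ₗ (HB.str ^ (m+1)).toLinearMap)
          (LinearMap.id : A →ₗ[K] A))
        (TensorProduct.map (LinearMap.id : A →ₗ[K] A) coact (AC.comul a)))
    =
    TensorProduct.map
      (TensorProduct.map (TensorProduct.lift AA.mul) (LinearMap.id : H →ₗ[K] H)
        ∘ₗ (TensorProduct.assoc K A A H).symm.toLinearMap
        ∘ₗ TensorProduct.map (LinearMap.id : A →ₗ[K] A)
            (TensorProduct.map
              (TensorProduct.lift σ ∘ₗ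
                TensorProduct.map (HB.str ^ (k+m+2)).toLinearMap (HB.str ^ (k+1)).toLinearMap)
              (TensorProduct.lift HB.mul ∘ₗ
                TensorProduct.map (HB.str ^ (m+2)).toLinearMap HB.str.toLinearMap)
            ∘ₗ (TensorProduct.tensorTensorTensorComm K H H H H).toLinearMap)
        ∘ₗ (TensorProduct.assoc K A (H ⊗[K] H) (H ⊗[K] H)).toLinearMap)
      (LinearMap.id : A →ₗ[K] A)
      ((TensorProduct.assoc K (A ⊗[K] (H ⊗[K] H)) (H ⊗[K] H) A).symm
        (TensorProduct.map (LinearMap.id : A ⊗[K] (H ⊗[K] H) →ₗ[K] A ⊗[K] (H ⊗[K] H))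
          (TensorProduct.comm K A (H ⊗[K] H)).toLinearMap
          (TensorProduct.assoc K (A ⊗[K] (H ⊗[K] H)) A (H ⊗[K] H)
            ((TensorProduct.assoc K A (H ⊗[K] H) A).symm
                (TensorProduct.map (LinearMap.id : A →ₗ[K] A)
                  (TensorProduct.map HB.comul (LinearMap.id : A →ₗ[K] A))
                  (TensorProduct.map (LinearMap.id : A →ₗ[K] A) coact (AC.comul a)))
              ⊗ₜ[K] HB.comul g))))

/-- Auxiliary map `(n ⊗ w) ⊗ t ↦ (α^j(n)·t) ⊗ f(w)` on `(H ⊗ M) ⊗ H`. -/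
def coactMulAux (HB : HomBialgebraStr K H) (j : ℤ) (f : M →ₗ[K] M) :
    (H ⊗[K] M) ⊗[K] H →ₗ[K] H ⊗[K] M :=
  TensorProduct.map
      (TensorProduct.lift HB.mul ∘ₗ
        TensorProduct.map (HB.str ^ j).toLinearMap (LinearMap.id : H →ₗ[K] H)) f
    ∘ₗ (TensorProduct.assoc K H H M).symm.toLinearMap
    ∘ₗ TensorProduct.map (LinearMap.id : H →ₗ[K] H) (TensorProduct.comm K M H).toLinearMap
    ∘ₗ (TensorProduct.assoc K H M H).toLinearMap

/-- (A1): `ε_A` is an algebra map. -/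
def CondA1 (AA : HomAlgebraStr K A) (AC : HomCoalgebraStr K A) : Prop :=
  (∀ a b : A, AC.counit (AA.mul a b) = AC.counit a * AC.counit b) ∧ AC.counit AA.one = 1

/-- (A2): `ε_A(h·a) = ε_H(h)ε_A(a)`. -/
def CondA2 (HB : HomBialgebraStr K H) (AC : HomCoalgebraStr K A)
    (act : H →ₗ[K] A →ₗ[K] A) : Prop :=
  ∀ (h : H) (a : A), AC.counit (act h a) = HB.counit h * AC.counit a

/-- (A3): `σ` is a coalgebra map. -/
def CondA3 (HB : HomBialgebraStr K H) (AC : HomCoalgebraStr K A)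
    (σ : H →ₗ[K] H →ₗ[K] A) : Prop :=
  (∀ h g : H,
    AC.comul (σ h g)
      = TensorProduct.map (TensorProduct.lift σ) (TensorProduct.lift σ)
          (TensorProduct.tensorTensorTensorComm K H H H H (HB.comul h ⊗ₜ[K] HB.comul g))) ∧
  (∀ h g : H, AC.counit (σ h g) = HB.counit h * HB.counit g)

/-- (A4): `Δ_A(1_A) = 1_A ⊗ 1_A`. -/
def CondA4 (AA : HomAlgebraStr K A) (AC : HomCoalgebraStr K A) : Prop :=
  AC.comul AA.one = AA.one ⊗ₜ[K] AA.one

/-- (A5): the coaction is an algebra map. -/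
def CondA5 (HB : HomBialgebraStr K H) (AA : HomAlgebraStr K A)
    (coact : A →ₗ[K] H ⊗[K] A) : Prop :=
  (∀ a b : A,
    coact (AA.mul a b)
      = TensorProduct.map (TensorProduct.lift HB.mul) (TensorProduct.lift AA.mul)
          (TensorProduct.tensorTensorTensorComm K H A H A (coact a ⊗ₜ[K] coact b))) ∧
  coact AA.one = HB.one ⊗ₜ[K] AA.one

/-- (A6). -/
def CondA6 (HB : HomBialgebraStr K H) (coact : A →ₗ[K] H ⊗[K] A)
    (σ : H →ₗ[K] H →ₗ[K] A) (m k : ℤ) : Prop :=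
  ∀ h g : H,
    coactMulAux HB (m-1) (LinearMap.id : A →ₗ[K] A)
      (TensorProduct.map
        (coact ∘ₗ TensorProduct.lift σ ∘ₗ
          TensorProduct.map (HB.str ^ (k+2)).toLinearMap (HB.str ^ (k+2)).toLinearMap)
        ((HB.str ^ (-1 : ℤ)).toLinearMap ∘ₗ TensorProduct.lift HB.mul)
        (TensorProduct.tensorTensorTensorComm K H H H H (HB.comul h ⊗ₜ[K] HB.comul g)))
    =
    TensorProduct.map (TensorProduct.lift HB.mul)
      (TensorProduct.lift σ ∘ₗ
        TensorProduct.map (HB.str ^ (k+1)).toLinearMap (HB.str ^ (k+1)).toLinearMap)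
      (TensorProduct.tensorTensorTensorComm K H H H H (HB.comul h ⊗ₜ[K] HB.comul g))

/-- (A7). -/
def CondA7 (HB : HomBialgebraStr K H) (AA : HomAlgebraStr K A) (AC : HomCoalgebraStr K A)
    (act : H →ₗ[K] A →ₗ[K] A) (coact : A →ₗ[K] H ⊗[K] A)
    (σ : H →ₗ[K] H →ₗ[K] A) (m k : ℤ) : Prop :=
  ∀ a b : A,
    AC.comul (AA.mul a b) =
      TensorProduct.map
        (TensorProduct.lift AA.mul
          ∘ₗ TensorProduct.map (LinearMap.id : A →ₗ[K] A)
              (TensorProduct.lift AA.mul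
                ∘ₗ TensorProduct.map
                    (TensorProduct.lift act ∘ₗ
                      TensorProduct.map (HB.str ^ (2*m)).toLinearMap (AA.str ^ (-2 : ℤ)).toLinearMap)
                    (TensorProduct.lift σ ∘ₗ
                      TensorProduct.map (HB.str ^ (k+m+1)).toLinearMap (HB.str ^ (k+m)).toLinearMap)
                ∘ₗ (TensorProduct.tensorTensorTensorComm K H H A H).toLinearMap)
          ∘ₗ (TensorProduct.assoc K A (H ⊗[K] H) (A ⊗[K] H)).toLinearMap)
        (AA.str.toLinearMap ∘ₗ TensorProduct.lift AA.mul)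
        (TensorProduct.tensorTensorTensorComm K (A ⊗[K] (H ⊗[K] H)) A (A ⊗[K] H) A
          ((TensorProduct.assoc K A (H ⊗[K] H) A).symm
              (TensorProduct.map (LinearMap.id : A →ₗ[K] A)
                (TensorProduct.map HB.comul (LinearMap.id : A →ₗ[K] A))
                (TensorProduct.map (LinearMap.id : A →ₗ[K] A) coact (AC.comul a)))
            ⊗ₜ[K]
            (TensorProduct.assoc K A H A).symm
              (TensorProduct.map (LinearMap.id : A →ₗ[K] A) coact (AC.comul b))))

/-- (A8). -/
def CondA8 (HB : HomBialgebraStr K H) (AA : HomAlgebraStr K A) (AC : HomCoalgebraStr K A)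
    (act : H →ₗ[K] A →ₗ[K] A) (coact : A →ₗ[K] H ⊗[K] A)
    (σ : H →ₗ[K] H →ₗ[K] A) (m k : ℤ) : Prop :=
  ∀ (h : H) (b : A),
    AC.comul (act ((HB.str ^ m) h) b) =
      TensorProduct.map
        (TensorProduct.lift AA.mul
          ∘ₗ TensorProduct.map
              (TensorProduct.lift act ∘ₗ
                TensorProduct.map (HB.str ^ m).toLinearMap (AA.str ^ (-1 : ℤ)).toLinearMap)
              (TensorProduct.lift σ ∘ₗ
                TensorProduct.map (HB.str ^ (k+1)).toLinearMap (HB.str ^ (k+m+1)).toLinearMap)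
          ∘ₗ (TensorProduct.tensorTensorTensorComm K H H A H).toLinearMap)
        (TensorProduct.lift act ∘ₗ
          TensorProduct.map (HB.str ^ m).toLinearMap AA.str.toLinearMap)
        (TensorProduct.tensorTensorTensorComm K (H ⊗[K] H) H (A ⊗[K] H) A
          (TensorProduct.map HB.comul (LinearMap.id : H →ₗ[K] H) (HB.comul h)
            ⊗ₜ[K]
            (TensorProduct.assoc K A H A).symm
              (TensorProduct.map (LinearMap.id : A →ₗ[K] A) coact (AC.comul b))))

/-- (A9). -/
def CondA9 (HB : HomBialgebraStr K H) (act : H →ₗ[K] A →ₗ[K] A)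
    (coact : A →ₗ[K] H ⊗[K] A) (m : ℤ) : Prop :=
  ∀ (h : H) (b : A),
    coactMulAux HB (m-1) (LinearMap.id : A →ₗ[K] A)
      (TensorProduct.map (coact ∘ₗ (act.flip b) ∘ₗ (HB.str ^ (m+1)).toLinearMap)
        (LinearMap.id : H →ₗ[K] H) (HB.comul h))
    =
    TensorProduct.map
      (TensorProduct.lift HB.mul ∘ₗ
        TensorProduct.map (LinearMap.id : H →ₗ[K] H) (HB.str ^ m).toLinearMap)
      (TensorProduct.lift act ∘ₗ
        TensorProduct.map (HB.str ^ m).toLinearMap (LinearMap.id : A →ₗ[K] A))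
      (TensorProduct.tensorTensorTensorComm K H H H A (HB.comul h ⊗ₜ[K] coact b))

/-- The Radford `[(m,k),m]`-biproduct structure on `A ⊗ H`. -/
structure IsRadfordBiproduct (HB : HomBialgebraStr K H) (AA : HomAlgebraStr K A)
    (AC : HomCoalgebraStr K A) (act : H →ₗ[K] A →ₗ[K] A) (coact : A →ₗ[K] H ⊗[K] A)
    (σ : H →ₗ[K] H →ₗ[K] A) (m k : ℤ) (B : HomBialgebraStr K (A ⊗[K] H)) : Prop where
  mul_def : ∀ (a : A) (h : H) (b : A) (g : H),
    B.mul (a ⊗ₜ[K] h) (b ⊗ₜ[K] g) = cpMulElem HB AA act σ m k a h b g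
  one_def : B.one = AA.one ⊗ₜ[K] HB.one
  comul_def : ∀ (a : A) (h : H), B.comul (a ⊗ₜ[K] h) = scComulElem HB AC coact m a h
  counit_def : ∀ (a : A) (h : H), B.counit (a ⊗ₜ[K] h) = AC.counit a * HB.counit h
  str_def : B.str = TensorProduct.congr AA.str HB.str

/-- `S_H` is a `σ`-antipode for `(H, α)`. -/
structure IsSigmaAntipode (HB : HomBialgebraStr K H) (AA : HomAlgebraStr K A)
    (σ : H →ₗ[K] H →ₗ[K] A) (S : H →ₗ[K] H) : Prop where
  antipode_str : ∀ h : H, S (HB.str h) = HB.str (S h)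
  right : ∀ h : H,
    TensorProduct.map (TensorProduct.lift σ) (TensorProduct.lift HB.mul)
        (TensorProduct.tensorTensorTensorComm K H H H H
          (TensorProduct.map HB.comul (HB.comul ∘ₗ S) (HB.comul h)))
      = HB.counit h • (AA.one ⊗ₜ[K] HB.one)
  left : ∀ h : H,
    TensorProduct.map (TensorProduct.lift σ) (TensorProduct.lift HB.mul)
        (TensorProduct.tensorTensorTensorComm K H H H H
          (TensorProduct.map (HB.comul ∘ₗ S) HB.comul (HB.comul h)))
      = HB.counit h • (AA.one ⊗ₜ[K] HB.one)

/-- `S_A` is a convolution inverse of `id_A`. -/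
def IsConvInvOfId (AA : HomAlgebraStr K A) (AC : HomCoalgebraStr K A)
    (SA : A →ₗ[K] A) : Prop :=
  (∀ a : A, TensorProduct.lift (AA.mul ∘ₗ SA) (AC.comul a) = AC.counit a • AA.one) ∧
  (∀ a : A, TensorProduct.lift (AA.mul.compl₂ SA) (AC.comul a) = AC.counit a • AA.one)

/-- `σ` and `σinv` are convolution inverses of each other. -/
def IsConvInvPair (HB : HomBialgebraStr K H) (AA : HomAlgebraStr K A)
    (σ σinv : H →ₗ[K] H →ₗ[K] A) : Prop :=
  (∀ h g : H,
    TensorProduct.lift AA.mul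
      (TensorProduct.map (TensorProduct.lift σ) (TensorProduct.lift σinv)
        (TensorProduct.tensorTensorTensorComm K H H H H (HB.comul h ⊗ₜ[K] HB.comul g)))
    = (HB.counit h * HB.counit g) • AA.one) ∧
  (∀ h g : H,
    TensorProduct.lift AA.mul
      (TensorProduct.map (TensorProduct.lift σinv) (TensorProduct.lift σ)
        (TensorProduct.tensorTensorTensorComm K H H H H (HB.comul h ⊗ₜ[K] HB.comul g)))
    = (HB.counit h * HB.counit g) • AA.one)

/-- The Radford antipode formula
`S(a ⊗ h) = (1_A ⊗ S_H(α^{m−1}(a₍₋₁₎)α⁻²(h)))·(S_A(a₍₀₎) ⊗ 1_H)`. -/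
def radfordAntipodeElem (HB : HomBialgebraStr K H) (AA : HomAlgebraStr K A)
    (coact : A →ₗ[K] H ⊗[K] A)
    (Bmul : (A ⊗[K] H) →ₗ[K] (A ⊗[K] H) →ₗ[K] (A ⊗[K] H))
    (SH : H →ₗ[K] H) (SA : A →ₗ[K] A) (m : ℤ) (a : A) (h : H) : A ⊗[K] H :=
  TensorProduct.lift Bmul
    (TensorProduct.map
      ((TensorProduct.mk K A H AA.one) ∘ₗ SH ∘ₗ (HB.mul.flip ((HB.str ^ (-2 : ℤ)) h)) ∘ₗ
        (HB.str ^ (m - 1)).toLinearMap)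
      (((TensorProduct.mk K A H).flip HB.one) ∘ₗ SA)
      (coact a))

/-- `φ^l(l ⊗ (a ⊗ h)) = (α(l₁₁)·β⁻¹(a)) σ(α^{k+2−m}(l₁₂), α^{k+1}(h₁)) ⊗ α^{1−m}(l₂)α(h₂)`. -/
def philElem (HB : HomBialgebraStr K H) (AA : HomAlgebraStr K A)
    (act : H →ₗ[K] A →ₗ[K] A) (σ : H →ₗ[K] H →ₗ[K] A) (m k : ℤ)
    (l : H) (a : A) (h : H) : A ⊗[K] H :=
  TensorProduct.map
    (TensorProduct.lift AA.mul ∘ₗ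
      TensorProduct.map ((act.flip ((AA.str ^ (-1 : ℤ)) a)) ∘ₗ HB.str.toLinearMap)
        (TensorProduct.lift σ ∘ₗ
          TensorProduct.map (HB.str ^ (k+2-m)).toLinearMap (HB.str ^ (k+1)).toLinearMap) ∘ₗ
      (TensorProduct.assoc K H H H).toLinearMap)
    (TensorProduct.lift HB.mul ∘ₗ
      TensorProduct.map (HB.str ^ (1-m)).toLinearMap HB.str.toLinearMap)
    (TensorProduct.map (TensorProduct.map HB.comul (LinearMap.id : H →ₗ[K] H))
      (LinearMap.id : H ⊗[K] H →ₗ[K] H ⊗[K] H)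
      (TensorProduct.tensorTensorTensorComm K H H H H (HB.comul l ⊗ₜ[K] HB.comul h)))

/-- `φ^r((a ⊗ h) ⊗ l) = a σ(α^{k+1}(h₁), α^{k+1−m}(l₁)) ⊗ α(h₂)α^{1−m}(l₂)`. -/
def phirElem (HB : HomBialgebraStr K H) (AA : HomAlgebraStr K A)
    (σ : H →ₗ[K] H →ₗ[K] A) (m k : ℤ) (a : A) (h : H) (l : H) : A ⊗[K] H :=
  TensorProduct.map
    ((AA.mul a) ∘ₗ TensorProduct.lift σ ∘ₗ
      TensorProduct.map (HB.str ^ (k+1)).toLinearMap (HB.str ^ (k+1-m)).toLinearMap)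
    (TensorProduct.lift HB.mul ∘ₗ
      TensorProduct.map HB.str.toLinearMap (HB.str ^ (1-m)).toLinearMap)
    (TensorProduct.tensorTensorTensorComm K H H H H (HB.comul h ⊗ₜ[K] HB.comul l))

/-- `(M, μ, φ)` is a left `(H, α, σ̄)`-Hom module. -/
def IsLeftSigmaHomModule (HB : HomBialgebraStr K H)
    (mulM : M →ₗ[K] M →ₗ[K] M) (strM : M →ₗ[K] M)
    (σbar : H →ₗ[K] H →ₗ[K] M) (φ : H →ₗ[K] M →ₗ[K] M) : Prop :=
  (∀ (g l : H) (x : M),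
    φ (HB.str g) (φ l x)
      = TensorProduct.lift mulM
          (TensorProduct.map (strM ∘ₗ TensorProduct.lift σbar)
            ((φ.flip x) ∘ₗ TensorProduct.lift HB.mul)
            (TensorProduct.tensorTensorTensorComm K H H H H (HB.comul g ⊗ₜ[K] HB.comul l))))
  ∧ (∀ x : M, φ HB.one x = strM x)

/-- `(M, μ, φ)` is a right `(H, α, σ̄)`-Hom module. -/
def IsRightSigmaHomModule (HB : HomBialgebraStr K H)
    (mulM : M →ₗ[K] M →ₗ[K] M) (strM : M →ₗ[K] M)
    (σbar : H →ₗ[K] H →ₗ[K] M) (φ : M →ₗ[K] H →ₗ[K] M) : Prop :=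
  (∀ (x : M) (l g : H),
    φ (φ x l) (HB.str g)
      = mulM (strM x)
          (TensorProduct.lift φ
            (TensorProduct.map (TensorProduct.lift σbar) (TensorProduct.lift HB.mul)
              (TensorProduct.tensorTensorTensorComm K H H H H (HB.comul l ⊗ₜ[K] HB.comul g)))))
  ∧ (∀ x : M, φ x HB.one = strM x)

/-- `(M, μ, φ⁺, φ⁻)` is a weak `(H, α)` Hom-bimodule. -/
def IsWeakHomBimodule (HB : HomBialgebraStr K H) (strM : M →ₗ[K] M)
    (φl : H →ₗ[K] M →ₗ[K] M) (φr : M →ₗ[K] H →ₗ[K] M) : Prop :=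
  (∀ x : M, φl HB.one x = strM x) ∧ (∀ x : M, φr x HB.one = strM x) ∧
  (∀ (h : H) (x : M) (g : H), φl (HB.str h) (φr x g) = φr (φl h x) (HB.str g))

/-- A weak `m`-Hom admissible mapping system `C ⇄ A ⇄ H`. -/
structure WeakAdmissibleSystem (HB : HomBialgebraStr K H)
    (CA : HomAlgebraStr K C) (CC : HomCoalgebraStr K C)
    (coact : C →ₗ[K] H ⊗[K] C) (m : ℤ) (AB : HomBialgebraStr K A)
    (j : C →ₗ[K] A) (p : A →ₗ[K] C) (i : H →ₗ[K] A) (π : A →ₗ[K] H) : Prop where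
  c_str_eq : CA.str = CC.str
  p_j : ∀ c : C, p (j c) = c
  pi_i : ∀ h : H, π (i h) = h
  pi_mul : ∀ a b : A, π (AB.mul a b) = HB.mul (π a) (π b)
  pi_one : π AB.one = HB.one
  pi_str : ∀ a : A, π (AB.str a) = HB.str (π a)
  pi_comul : ∀ a : A, TensorProduct.map π π (AB.comul a) = HB.comul (π a)
  pi_counit : ∀ a : A, HB.counit (π a) = AB.counit a
  i_one : i HB.one = AB.one
  i_str : ∀ h : H, i (HB.str h) = AB.str (i h)
  i_comul : ∀ h : H, TensorProduct.map i i (HB.comul h) = AB.comul (i h)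
  i_counit : ∀ h : H, AB.counit (i h) = HB.counit h
  p_str : ∀ a : A, p (AB.str a) = CC.str (p a)
  p_comul : ∀ a : A, TensorProduct.map p p (AB.comul a) = CC.comul (p a)
  p_counit : ∀ a : A, CC.counit (p a) = AB.counit a
  j_mul : ∀ c d : C, j (CA.mul c d) = AB.mul (j c) (j d)
  j_one : j CA.one = AB.one
  j_str : ∀ c : C, j (CC.str c) = AB.str (j c)
  p_left_act : ∀ (h : H) (a : A),
    p (AB.mul (i ((HB.str ^ (-m)) h)) a) = HB.counit h • CC.str (p a)
  p_right_act : ∀ (a : A) (h : H),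
    p (AB.mul a (i ((HB.str ^ (-m)) h))) = HB.counit h • CC.str (p a)
  sigma_mod : ∃ σbar : H →ₗ[K] H →ₗ[K] A,
    IsLeftSigmaHomModule HB AB.mul AB.str.toLinearMap σbar
        (AB.mul ∘ₗ i ∘ₗ (HB.str ^ (-m)).toLinearMap)
      ∧ IsRightSigmaHomModule HB AB.mul AB.str.toLinearMap σbar
        (AB.mul.compl₂ (i ∘ₗ (HB.str ^ (-m)).toLinearMap))
  sub_l : ∀ c : C, ∃ y : H ⊗[K] C,
    TensorProduct.map ((HB.str ^ (-m)).toLinearMap ∘ₗ π) (LinearMap.id : A →ₗ[K] A)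
        (AB.comul (j c))
      = TensorProduct.map (LinearMap.id : H →ₗ[K] H) j y
  sub_r : ∀ c : C, ∃ z : C ⊗[K] H,
    TensorProduct.map (LinearMap.id : A →ₗ[K] A) ((HB.str ^ (-m)).toLinearMap ∘ₗ π)
        (AB.comul (j c))
      = TensorProduct.map j (LinearMap.id : H →ₗ[K] H) z
  p_col : ∀ c : C,
    TensorProduct.map (LinearMap.id : H →ₗ[K] H) p
        (TensorProduct.map ((HB.str ^ (-m)).toLinearMap ∘ₗ π) (LinearMap.id : A →ₗ[K] A)
          (AB.comul (j c)))
      = coact c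
  p_cor : ∀ c : C,
    TensorProduct.map p (LinearMap.id : H →ₗ[K] H)
        (TensorProduct.map (LinearMap.id : A →ₗ[K] A) ((HB.str ^ (-m)).toLinearMap ∘ₗ π)
          (AB.comul (j c)))
      = CC.str.symm c ⊗ₜ[K] HB.one
  split : ∀ a : A,
    TensorProduct.lift AB.mul (TensorProduct.map (j ∘ₗ p) (i ∘ₗ π) (AB.comul a)) = a

/-- The map `f : C ♯ H → A`, `c ⊗ h ↦ γ⁻¹(j(c)i(h))`. -/
def admF (AB : HomBialgebraStr K A) (j : C →ₗ[K] A) (i : H →ₗ[K] A) :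
    C ⊗[K] H →ₗ[K] A :=
  AB.str.symm.toLinearMap ∘ₗ TensorProduct.lift ((AB.mul ∘ₗ j).compl₂ i)

/-- The map `g : A → C ♯ H`, `a ↦ β(p(a₁)) ⊗ α(π(a₂))`. -/
def admG (HB : HomBialgebraStr K H) (CC : HomCoalgebraStr K C)
    (AB : HomBialgebraStr K A) (p : A →ₗ[K] C) (π : A →ₗ[K] H) :
    A →ₗ[K] C ⊗[K] H :=
  TensorProduct.map (CC.str.toLinearMap ∘ₗ p) (HB.str.toLinearMap ∘ₗ π) ∘ₗ AB.comul

end Defs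

/-!
Composing the operations of a monoidal Hom-algebra, Hom-coalgebra or Hom-bialgebra with powers of
its structure map `α` turns it into an ordinary one of which `α` is an automorphism, and a
Hom-bialgebra structure on `A ⊗ H` exists if and only if the untwisted operations satisfy the
ordinary bialgebra laws. This reduces the theorem to the ordinary biproduct of the untwisted data.

There the conditions are read off a bialgebra `A ⊗ H` by applying the maps `a ⊗ h ↦ ε(h)a` and
`a ⊗ h ↦ ε(a)h` to the tensor factors of `Δ(xy) = Δ(x)Δ(y)`. Conversely, `a ⊗ h = (a ⊗ 1)(1 ⊗ h)` and
products in `A ⊗ H` are associative, so that it suffices to check the law on products of elements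
`a ⊗ 1` and `1 ⊗ h`. For `(a ⊗ 1)(1 ⊗ h)` itself it is the twisted cocycle condition.
-/

section TensorMul

variable {R V V' W W' P Q : Type*} [CommSemiring R]
  [AddCommMonoid V] [Module R V] [AddCommMonoid V'] [Module R V']
  [AddCommMonoid W] [Module R W] [AddCommMonoid W'] [Module R W']
  [AddCommMonoid P] [Module R P] [AddCommMonoid Q] [Module R Q]

/-- The componentwise product `(v ⊗ w) ⊗ (v' ⊗ w') ↦ f (v ⊗ v') ⊗ g (w ⊗ w')` of two bilinear
maps, used to state every compatibility between a product and a coproduct. -/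
def tensorMul (f : V ⊗[R] V' →ₗ[R] P) (g : W ⊗[R] W' →ₗ[R] Q) :
    (V ⊗[R] W) ⊗[R] (V' ⊗[R] W') →ₗ[R] P ⊗[R] Q :=
  map f g ∘ₗ (tensorTensorTensorComm R V W V' W').toLinearMap

@[simp]
lemma tensorMul_tmul (f : V ⊗[R] V' →ₗ[R] P) (g : W ⊗[R] W' →ₗ[R] Q)
    (v : V) (w : W) (v' : V') (w' : W') :
    tensorMul f g ((v ⊗ₜ w) ⊗ₜ (v' ⊗ₜ w')) = f (v ⊗ₜ v') ⊗ₜ g (w ⊗ₜ w') := rfl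

lemma tensorMul_assoc {f : V ⊗[R] V →ₗ[R] V}
    (hf : ∀ x y z, f (f (x ⊗ₜ y) ⊗ₜ z) = f (x ⊗ₜ f (y ⊗ₜ z))) (x y z : V ⊗[R] V) :
    tensorMul f f (tensorMul f f (x ⊗ₜ y) ⊗ₜ z) = tensorMul f f (x ⊗ₜ tensorMul f f (y ⊗ₜ z)) := by
  hopf_tensor_induction x with x₁ x₂
  hopf_tensor_induction y with y₁ y₂
  hopf_tensor_induction z with z₁ z₂
  simp only [tensorMul_tmul, hf]

end TensorMul

section Coalgebra

variable {R C : Type*} [CommSemiring R] [AddCommMonoid C] [Module R C] [Coalgebra R C]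

open Coalgebra

lemma lid_counit_comul (c : C) :
    TensorProduct.lid R C (map counit LinearMap.id (comul c)) = c :=
  congr(TensorProduct.lid R C $(rTensor_counit_comul (R := R) c)).trans (by simp)

lemma rid_counit_comul (c : C) :
    TensorProduct.rid R C (map LinearMap.id counit (comul c)) = c :=
  congr(TensorProduct.rid R C $(lTensor_counit_comul (R := R) c)).trans (by simp)

variable (R C) in
/-- The iterated comultiplication `c ↦ c₁ ⊗ ((c₂ ⊗ c₃) ⊗ c₄)`, bracketed so that a compatibility
condition can be applied to the two middle factors. -/
def comul₄ : C →ₗ[R] C ⊗[R] ((C ⊗[R] C) ⊗[R] C) :=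
  map LinearMap.id (map comul LinearMap.id ∘ₗ comul) ∘ₗ comul

lemma comul₄_eq (c : C) :
    comul₄ R C c = map LinearMap.id (TensorProduct.assoc R C C C).symm.toLinearMap
      (TensorProduct.assoc R C C (C ⊗[R] C) (map comul comul (comul c))) := by
  have hcoassoc (d : C) : map comul LinearMap.id (comul (R := R) d) =
      (TensorProduct.assoc R C C C).symm (map LinearMap.id comul (comul d)) :=
    (LinearEquiv.eq_symm_apply _).2 (coassoc_apply d)
  have hsplit : map comul comul (comul (R := R) c) =
      map LinearMap.id comul (map comul LinearMap.id (comul c)) := by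
    rw [map_map]; rfl
  rw [hsplit, hcoassoc]
  simp only [comul₄, LinearMap.comp_apply]
  hopf_tensor_induction comul (R := R) c with x y
  simp only [map_tmul, LinearMap.comp_apply, hcoassoc]
  hopf_tensor_induction comul (R := R) y with y₁ y₂
  simp only [map_tmul, assoc_symm_tmul, assoc_tmul, LinearMap.id_apply, LinearEquiv.coe_coe]

end Coalgebra

/-- The bialgebra axioms linking a product and a coproduct; associativity, coassociativity and the
unit and counit laws are left to the context. -/
structure IsBialgebraStr {R N : Type*} [CommSemiring R] [AddCommMonoid N] [Module R N]
    (mul : N ⊗[R] N →ₗ[R] N) (one : N) (comul : N →ₗ[R] N ⊗[R] N) (counit : N →ₗ[R] R) : Prop where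
  comul_mul : ∀ x y, comul (mul (x ⊗ₜ y)) = tensorMul mul mul (comul x ⊗ₜ comul y)
  comul_one : comul one = one ⊗ₜ one
  counit_mul : ∀ x y, counit (mul (x ⊗ₜ y)) = counit x * counit y
  counit_one : counit one = 1

namespace HomAlgebraStr

variable {K N : Type*} [Field K] [AddCommGroup N] [Module K N] (M : HomAlgebraStr K N)

/-- The product of the ordinary algebra obtained by composing the product of a monoidal
Hom-algebra with the inverse of its structure map. -/
def untwistMul : N ⊗[K] N →ₗ[K] N :=
  M.str.symm.toLinearMap ∘ₗ TensorProduct.lift M.mul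

lemma untwistMul_tmul (x y : N) : M.untwistMul (x ⊗ₜ y) = M.str.symm (M.mul x y) := rfl

lemma mul_eq_str_untwistMul (x y : N) : M.mul x y = M.str (M.untwistMul (x ⊗ₜ y)) :=
  (M.str.apply_symm_apply _).symm

lemma untwistMul_str (x y : N) :
    M.untwistMul (M.str x ⊗ₜ M.str y) = M.str (M.untwistMul (x ⊗ₜ y)) := by
  rw [untwistMul_tmul, ← M.str_mul, M.str.symm_apply_apply, mul_eq_str_untwistMul]

lemma untwistMul_assoc (x y z : N) :
    M.untwistMul (M.untwistMul (x ⊗ₜ y) ⊗ₜ z) = M.untwistMul (x ⊗ₜ M.untwistMul (y ⊗ₜ z)) := by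
  have h := M.hom_assoc x y z
  simp only [mul_eq_str_untwistMul, untwistMul_str] at h
  exact (M.str.injective (M.str.injective h)).symm

lemma untwistMul_one (x : N) : M.untwistMul (x ⊗ₜ M.one) = x := by
  rw [untwistMul_tmul, M.mul_one, M.str.symm_apply_apply]

lemma one_untwistMul (x : N) : M.untwistMul (M.one ⊗ₜ x) = x := by
  rw [untwistMul_tmul, M.one_mul, M.str.symm_apply_apply]

end HomAlgebraStr

namespace HomCoalgebraStr

variable {K C : Type*} [Field K] [AddCommGroup C] [Module K C] (D : HomCoalgebraStr K C)

/-- The coproduct of the ordinary coalgebra obtained by composing the coproduct of a monoidal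
Hom-coalgebra with the structure map. -/
def untwistComul : C →ₗ[K] C ⊗[K] C :=
  map D.str.toLinearMap D.str.toLinearMap ∘ₗ D.comul

lemma untwistComul_apply (c : C) :
    D.untwistComul c = map D.str.toLinearMap D.str.toLinearMap (D.comul c) := rfl

lemma untwistComul_eq_comul_str (c : C) : D.untwistComul c = D.comul (D.str c) :=
  (D.comul_str c).symm

lemma untwistComul_str (c : C) :
    D.untwistComul (D.str c) = map D.str.toLinearMap D.str.toLinearMap (D.untwistComul c) := by
  rw [untwistComul_apply, untwistComul_eq_comul_str]

lemma untwistComul_coassoc (c : C) :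
    TensorProduct.assoc K C C C (D.untwistComul.rTensor C (D.untwistComul c)) =
      D.untwistComul.lTensor C (D.untwistComul c) := by
  let s : C →ₗ[K] C := D.str.toLinearMap
  have hleft (t : C ⊗[K] C) : map (s ∘ₗ s) (map (s ∘ₗ s) (s ∘ₗ s))
        (TensorProduct.assoc K C C C (map D.comul D.str.symm.toLinearMap t)) =
      TensorProduct.assoc K C C C (D.untwistComul.rTensor C (map s s t)) := by
    hopf_tensor_induction t with x y
    simp only [map_tmul, LinearMap.rTensor_tmul, s, LinearEquiv.coe_coe, untwistComul_str]
    rw [untwistComul_apply]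
    hopf_tensor_induction D.comul x with x₁ x₂
    simp
  have hright (t : C ⊗[K] C) : map (s ∘ₗ s) (map (s ∘ₗ s) (s ∘ₗ s))
        (map D.str.symm.toLinearMap D.comul t) =
      D.untwistComul.lTensor C (map s s t) := by
    hopf_tensor_induction t with x y
    simp only [map_tmul, LinearMap.lTensor_tmul, s, LinearEquiv.coe_coe, untwistComul_str]
    rw [untwistComul_apply]
    hopf_tensor_induction D.comul y with y₁ y₂
    simp
  rw [untwistComul_apply, ← hleft, ← D.hom_coassoc, hright]

lemma rTensor_counit_untwistComul (c : C) : D.counit.rTensor C (D.untwistComul c) = 1 ⊗ₜ c := by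
  apply (TensorProduct.lid K C).injective
  trans D.str (TensorProduct.lid K C (map D.counit LinearMap.id (D.comul c)))
  · rw [untwistComul_apply]
    hopf_tensor_induction D.comul c with x y
    simp [D.counit_str]
  · rw [D.counit_comul_left]
    simp

lemma lTensor_counit_untwistComul (c : C) : D.counit.lTensor C (D.untwistComul c) = c ⊗ₜ 1 := by
  apply (TensorProduct.rid K C).injective
  trans D.str (TensorProduct.rid K C (map LinearMap.id D.counit (D.comul c)))
  · rw [untwistComul_apply]
    hopf_tensor_induction D.comul c with x y
    simp [D.counit_str]
  · rw [D.counit_comul_right]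
    simp

/-- The ordinary coalgebra underlying a monoidal Hom-coalgebra. -/
@[reducible] def untwist : Coalgebra K C where
  comul := D.untwistComul
  counit := D.counit
  coassoc := LinearMap.ext D.untwistComul_coassoc
  rTensor_counit_comp_comul := LinearMap.ext D.rTensor_counit_untwistComul
  lTensor_counit_comp_comul := LinearMap.ext D.lTensor_counit_untwistComul

/-- The given coalgebra structure is the untwisting of `D`; a predicate rather than an instance, so
that the coalgebras on `H` and `A` may be arbitrary instances in the lemmas below. -/
structure IsUntwist [Coalgebra K C] : Prop where
  comul_eq : Coalgebra.comul (R := K) = D.untwistComul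
  counit_eq : Coalgebra.counit (R := K) = D.counit

end HomCoalgebraStr

/-- The monoidal Hom-coalgebra underlying a monoidal Hom-bialgebra. -/
def HomBialgebraStr.toHomCoalgebraStr {K N : Type*} [Field K] [AddCommGroup N] [Module K N]
    (B : HomBialgebraStr K N) : HomCoalgebraStr K N := { B with }

section UntwistBialgebra

variable {K N : Type*} [Field K] [AddCommGroup N] [Module K N]
  {M : HomAlgebraStr K N} {D : HomCoalgebraStr K N}

lemma tensorSquareMul_apply (mul : N →ₗ[K] N →ₗ[K] N) (u v : N ⊗[K] N) :
    tensorSquareMul mul u v =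
      tensorMul (TensorProduct.lift mul) (TensorProduct.lift mul) (u ⊗ₜ v) := rfl

lemma tensorMul_untwistMul_map_str (u v : N ⊗[K] N) :
    tensorMul M.untwistMul M.untwistMul
        (map M.str.toLinearMap M.str.toLinearMap u ⊗ₜ map M.str.toLinearMap M.str.toLinearMap v) =
      tensorSquareMul M.mul u v := by
  rw [tensorSquareMul_apply]
  hopf_tensor_induction u with u₁ u₂
  hopf_tensor_induction v with v₁ v₂
  simp only [map_tmul, tensorMul_tmul, LinearEquiv.coe_coe, M.untwistMul_str,
    ← M.mul_eq_str_untwistMul, lift.tmul]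

lemma untwistComul_untwistMul (h : M.str = D.str) (x y : N) :
    D.untwistComul (M.untwistMul (x ⊗ₜ y)) = D.comul (M.mul x y) := by
  rw [D.untwistComul_eq_comul_str, ← h, ← M.mul_eq_str_untwistMul]

lemma untwistComul_one (h : M.str = D.str) : D.untwistComul M.one = D.comul M.one := by
  rw [D.untwistComul_eq_comul_str, ← h, M.str_one]

lemma counit_untwistMul (h : M.str = D.str) (x y : N) :
    D.counit (M.untwistMul (x ⊗ₜ y)) = D.counit (M.mul x y) := by
  rw [M.mul_eq_str_untwistMul, h, D.counit_str]

theorem isBialgebraStr_untwist_iff (h : M.str = D.str) :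
    IsBialgebraStr M.untwistMul M.one D.untwistComul D.counit ↔
      (∀ x y, D.comul (M.mul x y) = tensorSquareMul M.mul (D.comul x) (D.comul y)) ∧
        D.comul M.one = M.one ⊗ₜ M.one ∧
        (∀ x y, D.counit (M.mul x y) = D.counit x * D.counit y) ∧ D.counit M.one = 1 := by
  have hmul (x y : N) : tensorMul M.untwistMul M.untwistMul (D.untwistComul x ⊗ₜ D.untwistComul y) =
      tensorSquareMul M.mul (D.comul x) (D.comul y) := by
    simp only [D.untwistComul_apply, ← h, tensorMul_untwistMul_map_str]
  constructor
  · rintro ⟨h1, h2, h3, h4⟩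
    simp only [untwistComul_untwistMul h, hmul, untwistComul_one h, counit_untwistMul h]
      at h1 h2 h3
    exact ⟨h1, h2, h3, h4⟩
  · rintro ⟨h1, h2, h3, h4⟩
    constructor
    · simpa only [untwistComul_untwistMul h, hmul] using h1
    · rwa [untwistComul_one h]
    · simpa only [counit_untwistMul h] using h3
    · exact h4

theorem exists_homBialgebraStr_iff (h : M.str = D.str) :
    (∃ B : HomBialgebraStr K N, B.mul = M.mul ∧ B.one = M.one ∧ B.comul = D.comul ∧
        B.counit = D.counit ∧ B.str = M.str) ↔
      IsBialgebraStr M.untwistMul M.one D.untwistComul D.counit := by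
  rw [isBialgebraStr_untwist_iff h]
  constructor
  · rintro ⟨B, hmul, hone, hcomul, hcounit, -⟩
    rw [← hmul, ← hone, ← hcomul, ← hcounit]
    exact ⟨B.comul_mul, B.comul_one, B.counit_mul, B.counit_one⟩
  · rintro ⟨hcm, hc1, hem, he1⟩
    exact ⟨{ M with
      comul := D.comul
      counit := D.counit
      hom_coassoc := h ▸ D.hom_coassoc
      comul_str := h ▸ D.comul_str
      counit_comul_left := h ▸ D.counit_comul_left
      counit_comul_right := h ▸ D.counit_comul_right
      counit_str := h ▸ D.counit_str
      comul_mul := hcm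
      comul_one := hc1
      counit_mul := hem
      counit_one := he1 }, rfl, rfl, rfl, rfl, rfl⟩

end UntwistBialgebra

/-- The data of an ordinary (untwisted) Radford biproduct: unital products on `H` and `A`, an action
of `H` on `A`, a map `cocycle : H ⊗ H → A` and a coaction of `H` on `A`. -/
structure BiproductData (R H A : Type*) [CommSemiring R] [AddCommMonoid H] [Module R H]
    [AddCommMonoid A] [Module R A] where
  mulH : H ⊗[R] H →ₗ[R] H
  oneH : H
  mulA : A ⊗[R] A →ₗ[R] A
  oneA : A
  act : H ⊗[R] A →ₗ[R] A
  cocycle : H ⊗[R] H →ₗ[R] A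
  coact : A →ₗ[R] H ⊗[R] A

namespace BiproductData

variable {R H A : Type*} [CommSemiring R] [AddCommMonoid H] [Module R H]
  [AddCommMonoid A] [Module R A]

open Coalgebra

/-- The reassociation `a ⊗ ((h ⊗ b) ⊗ g) ↦ (a ⊗ h) ⊗ (b ⊗ g)`. -/
def reassoc : A ⊗[R] ((H ⊗[R] A) ⊗[R] H) →ₗ[R] (A ⊗[R] H) ⊗[R] (A ⊗[R] H) :=
  (TensorProduct.assoc R A H (A ⊗[R] H)).symm.toLinearMap ∘ₗ
    map LinearMap.id (TensorProduct.assoc R H A H).toLinearMap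

@[simp]
lemma reassoc_tmul (a b : A) (h g : H) :
    reassoc (R := R) (a ⊗ₜ ((h ⊗ₜ b) ⊗ₜ g)) = (a ⊗ₜ h) ⊗ₜ (b ⊗ₜ g) := rfl

variable (X : BiproductData R H A)

/-- The right multiplication `(a ⊗ h) ⊗ g ↦ a ⊗ hg` of `H` on `A ⊗ H`. -/
def mulRight : (A ⊗[R] H) ⊗[R] H →ₗ[R] A ⊗[R] H :=
  map LinearMap.id X.mulH ∘ₗ (TensorProduct.assoc R A H H).toLinearMap

/-- The right multiplication `(h ⊗ a) ⊗ g ↦ hg ⊗ a` of `H` on `H ⊗ A`. -/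
def coactMul : (H ⊗[R] A) ⊗[R] H →ₗ[R] H ⊗[R] A :=
  map X.mulH LinearMap.id ∘ₗ (TensorProduct.rightComm R H A H).toLinearMap

/-- The map `(h ⊗ g) ⊗ b ↦ (h · b)₍₋₁₎g ⊗ (h · b)₍₀₎`. -/
def coactAct : (H ⊗[R] H) ⊗[R] A →ₗ[R] H ⊗[R] A :=
  X.coactMul ∘ₗ map (X.coact ∘ₗ X.act) LinearMap.id ∘ₗ
    (TensorProduct.rightComm R H H A).toLinearMap

@[simp]
lemma mulRight_tmul (a : A) (h g : H) : X.mulRight ((a ⊗ₜ h) ⊗ₜ g) = a ⊗ₜ X.mulH (h ⊗ₜ g) := rfl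

@[simp]
lemma coactMul_tmul (h g : H) (a : A) : X.coactMul ((h ⊗ₜ a) ⊗ₜ g) = X.mulH (h ⊗ₜ g) ⊗ₜ a := rfl

@[simp]
lemma coactAct_tmul (h g : H) (b : A) :
    X.coactAct ((h ⊗ₜ g) ⊗ₜ b) = X.coactMul (X.coact (X.act (h ⊗ₜ b)) ⊗ₜ g) := rfl

/-- The map `a ↦ (a₁ ⊗ a₂₍₋₁₎) ⊗ a₂₍₀₎`. -/
def comulCoact [Coalgebra R A] : A →ₗ[R] (A ⊗[R] H) ⊗[R] A :=
  (TensorProduct.assoc R A H A).symm.toLinearMap ∘ₗ map LinearMap.id X.coact ∘ₗ comul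

lemma comulCoact_apply [Coalgebra R A] (a : A) : X.comulCoact a =
    (TensorProduct.assoc R A H A).symm (map LinearMap.id X.coact (comul a)) := rfl

/-- The map `a ⊗ h ↦ ε(a)h`. -/
def projH [Coalgebra R A] : A ⊗[R] H →ₗ[R] H :=
  (TensorProduct.lid R H).toLinearMap ∘ₗ map counit LinearMap.id

@[simp]
lemma projH_tmul [Coalgebra R A] (a : A) (h : H) :
    projH (a ⊗ₜ[R] h) = counit (R := R) a • h := by simp [projH]

lemma map_projH_comulCoact [Coalgebra R A] (a : A) :
    map projH LinearMap.id (X.comulCoact a) = X.coact a := by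
  trans X.coact (TensorProduct.lid R A (map counit LinearMap.id (comul a)))
  · rw [comulCoact_apply]
    hopf_tensor_induction comul (R := R) a with a₁ a₂
    trans TensorProduct.lid R (H ⊗[R] A) (counit (R := R) a₁ ⊗ₜ X.coact a₂)
    · rw [map_tmul]
      hopf_tensor_induction X.coact a₂ with n w
      simp [← smul_tmul']
    · simp
  · rw [lid_counit_comul]

variable [Coalgebra R H]

/-- The right `H`-coaction `a ⊗ h ↦ (a ⊗ h₁) ⊗ h₂` on `A ⊗ H`. -/
def rightCoact : A ⊗[R] H →ₗ[R] (A ⊗[R] H) ⊗[R] H :=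
  (TensorProduct.assoc R A H H).symm.toLinearMap ∘ₗ map LinearMap.id comul

lemma rightCoact_tmul (a : A) (h : H) :
    rightCoact (R := R) (a ⊗ₜ h) = (TensorProduct.assoc R A H H).symm (a ⊗ₜ comul h) := rfl

/-- The map `a ⊗ h ↦ ε(h)a`. -/
def projA : A ⊗[R] H →ₗ[R] A := (TensorProduct.rid R A).toLinearMap ∘ₗ map LinearMap.id counit

@[simp]
lemma projA_tmul (a : A) (h : H) : projA (a ⊗ₜ[R] h) = counit (R := R) h • a := by simp [projA]

/-- The map `h ⊗ (b ⊗ g) ↦ (h₁ · b)σ(h₂, g)`. -/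
def crossOne : H ⊗[R] (A ⊗[R] H) →ₗ[R] A :=
  X.mulA ∘ₗ tensorMul X.act X.cocycle ∘ₗ map comul LinearMap.id

/-- The `A`-component `(a ⊗ h) ⊗ (b ⊗ g) ↦ a((h₁ · b)σ(h₂, g))` of the crossed product. -/
def cross : (A ⊗[R] H) ⊗[R] (A ⊗[R] H) →ₗ[R] A :=
  X.mulA ∘ₗ map LinearMap.id X.crossOne ∘ₗ (TensorProduct.assoc R A H (A ⊗[R] H)).toLinearMap

/-- The crossed product multiplication on `A ⊗ H`. -/
def mulB : (A ⊗[R] H) ⊗[R] (A ⊗[R] H) →ₗ[R] A ⊗[R] H :=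
  tensorMul X.cross X.mulH ∘ₗ map rightCoact rightCoact

lemma crossOne_tmul (h : H) (y : A ⊗[R] H) :
    X.crossOne (h ⊗ₜ y) = X.mulA (tensorMul X.act X.cocycle (comul h ⊗ₜ y)) := rfl

lemma cross_tmul (a : A) (h : H) (y : A ⊗[R] H) :
    X.cross ((a ⊗ₜ h) ⊗ₜ y) = X.mulA (a ⊗ₜ X.crossOne (h ⊗ₜ y)) := rfl

lemma mulB_tmul (x y : A ⊗[R] H) :
    X.mulB (x ⊗ₜ y) = tensorMul X.cross X.mulH (rightCoact x ⊗ₜ rightCoact y) := rfl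

/-- The map `(h ⊗ ((p ⊗ q) ⊗ g)) ⊗ ((b ⊗ n) ⊗ a) ↦ (h₁ · b)σ(h₂, n) ⊗ ψ((p ⊗ q) ⊗ a) ⊗ g`,
reassociated: the common shape of both sides of `Δ((1 ⊗ h)(b ⊗ 1)) = Δ(1 ⊗ h)Δ(b ⊗ 1)`. -/
def actShuffle (ψ : (H ⊗[R] H) ⊗[R] A →ₗ[R] H ⊗[R] A) :
    (H ⊗[R] ((H ⊗[R] H) ⊗[R] H)) ⊗[R] ((A ⊗[R] H) ⊗[R] A) →ₗ[R] (A ⊗[R] H) ⊗[R] (A ⊗[R] H) :=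
  reassoc ∘ₗ tensorMul X.crossOne
    (map ψ LinearMap.id ∘ₗ (TensorProduct.rightComm R (H ⊗[R] H) H A).toLinearMap)

@[simp]
lemma actShuffle_tmul (ψ : (H ⊗[R] H) ⊗[R] A →ₗ[R] H ⊗[R] A) (h g : H) (p : H ⊗[R] H)
    (u : A ⊗[R] H) (a : A) : X.actShuffle ψ ((h ⊗ₜ (p ⊗ₜ g)) ⊗ₜ (u ⊗ₜ a)) =
      reassoc (X.crossOne (h ⊗ₜ u) ⊗ₜ (ψ (p ⊗ₜ a) ⊗ₜ g)) := rfl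

lemma actShuffle_comul₄_congr {ψ₁ ψ₂ : (H ⊗[R] H) ⊗[R] A →ₗ[R] H ⊗[R] A}
    (hψ : ∀ h a, ψ₁ (comul h ⊗ₜ a) = ψ₂ (comul h ⊗ₜ a)) (h : H) (t : (A ⊗[R] H) ⊗[R] A) :
    X.actShuffle ψ₁ (comul₄ R H h ⊗ₜ t) = X.actShuffle ψ₂ (comul₄ R H h ⊗ₜ t) := by
  simp only [comul₄, LinearMap.comp_apply]
  hopf_tensor_induction comul (R := R) h with h₁ h₂
  simp only [map_tmul, LinearMap.comp_apply]
  hopf_tensor_induction comul (R := R) h₂ with h₂₁ h₂₂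
  hopf_tensor_induction t with u a
  simp only [map_tmul, LinearMap.id_apply, actShuffle_tmul, hψ]

/-- The laws of the untwisted data that hold whether or not `A ⊗ H` is a bialgebra: `H` is a
bialgebra, `A ⊗ H` is a unital associative algebra, and `A` is an `H`-comodule. -/
structure IsBiproduct : Prop where
  bialgebraH : IsBialgebraStr X.mulH X.oneH (comul (R := R)) counit
  mulH_one : ∀ h, X.mulH (h ⊗ₜ X.oneH) = h
  one_mulH : ∀ h, X.mulH (X.oneH ⊗ₜ h) = h
  mulA_one : ∀ a, X.mulA (a ⊗ₜ X.oneA) = a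
  one_mulA : ∀ a, X.mulA (X.oneA ⊗ₜ a) = a
  act_one : ∀ h, X.act (h ⊗ₜ X.oneA) = counit (R := R) h • X.oneA
  mulB_one : ∀ x, X.mulB (x ⊗ₜ (X.oneA ⊗ₜ X.oneH)) = x
  one_mulB : ∀ x, X.mulB ((X.oneA ⊗ₜ X.oneH) ⊗ₜ x) = x
  mulB_assoc : ∀ x y z, X.mulB (X.mulB (x ⊗ₜ y) ⊗ₜ z) = X.mulB (x ⊗ₜ X.mulB (y ⊗ₜ z))
  coact_coassoc : ∀ a, TensorProduct.assoc R H H A (map comul LinearMap.id (X.coact a)) =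
    map LinearMap.id X.coact (X.coact a)
  counit_coact : ∀ a, TensorProduct.lid R A (map counit LinearMap.id (X.coact a)) = a

variable {X}

namespace IsBiproduct

lemma coactMul_one (hX : X.IsBiproduct) (t : H ⊗[R] A) : X.coactMul (t ⊗ₜ X.oneH) = t := by
  hopf_tensor_induction t with h a
  rw [coactMul_tmul, hX.mulH_one]

lemma mulRight_one (hX : X.IsBiproduct) (t : A ⊗[R] H) : X.mulRight (t ⊗ₜ X.oneH) = t := by
  hopf_tensor_induction t with a h
  rw [mulRight_tmul, hX.mulH_one]

lemma rightCoact_tmul_one (hX : X.IsBiproduct) (a : A) :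
    rightCoact (R := R) (a ⊗ₜ X.oneH) = (a ⊗ₜ X.oneH) ⊗ₜ X.oneH := by
  rw [rightCoact_tmul, hX.bialgebraH.comul_one, assoc_symm_tmul]

lemma cross_one_tmul (hX : X.IsBiproduct) (h : H) (y : A ⊗[R] H) :
    X.cross ((X.oneA ⊗ₜ h) ⊗ₜ y) = X.crossOne (h ⊗ₜ y) := by
  rw [cross_tmul, hX.one_mulA]

lemma projA_mulB (hX : X.IsBiproduct) (x y : A ⊗[R] H) :
    projA (X.mulB (x ⊗ₜ y)) = X.cross (x ⊗ₜ y) := by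
  hopf_tensor_induction x with a h
  hopf_tensor_induction y with b g
  trans X.cross ((a ⊗ₜ TensorProduct.rid R H (map LinearMap.id counit (comul h))) ⊗ₜ
    (b ⊗ₜ TensorProduct.rid R H (map LinearMap.id counit (comul g))))
  · rw [mulB_tmul, rightCoact_tmul, rightCoact_tmul]
    hopf_tensor_induction comul (R := R) h with h₁ h₂
    hopf_tensor_induction comul (R := R) g with g₁ g₂
    simp [hX.bialgebraH.counit_mul, smul_smul, ← smul_tmul', mul_comm]
  · rw [rid_counit_comul, rid_counit_comul]

lemma map_projA_projA_tensorMul_mulB (hX : X.IsBiproduct) (s t : (A ⊗[R] H) ⊗[R] (A ⊗[R] H)) :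
    map projA projA (tensorMul X.mulB X.mulB (s ⊗ₜ t)) = tensorMul X.cross X.cross (s ⊗ₜ t) := by
  hopf_tensor_induction s with x₁ x₂
  hopf_tensor_induction t with y₁ y₂
  simp [hX.projA_mulB]

lemma crossOne_oneH (hX : X.IsBiproduct) (y : A ⊗[R] H) :
    X.crossOne (X.oneH ⊗ₜ y) = projA y := by
  rw [← hX.cross_one_tmul, ← hX.projA_mulB, hX.one_mulB]

lemma crossOne_tmul_oneA (hX : X.IsBiproduct) (h g : H) :
    X.crossOne (h ⊗ₜ (X.oneA ⊗ₜ g)) = X.cocycle (h ⊗ₜ g) := by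
  conv_rhs => rw [← lid_counit_comul (R := R) h]
  rw [crossOne_tmul]
  hopf_tensor_induction comul (R := R) h with h₁ h₂
  simp [hX.act_one, smul_tmul, hX.one_mulA]

lemma cocycle_one (hX : X.IsBiproduct) (h : H) :
    X.cocycle (h ⊗ₜ X.oneH) = counit (R := R) h • X.oneA := by
  rw [← hX.crossOne_tmul_oneA, ← hX.cross_one_tmul, ← hX.projA_mulB, hX.mulB_one, projA_tmul]

lemma crossOne_tmul_oneH (hX : X.IsBiproduct) (h : H) (b : A) :
    X.crossOne (h ⊗ₜ (b ⊗ₜ X.oneH)) = X.act (h ⊗ₜ b) := by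
  conv_rhs => rw [← rid_counit_comul (R := R) h]
  rw [crossOne_tmul]
  hopf_tensor_induction comul (R := R) h with h₁ h₂
  simp [hX.cocycle_one, ← smul_tmul', hX.mulA_one]

lemma cross_tmul_oneH (hX : X.IsBiproduct) (a b : A) :
    X.cross ((a ⊗ₜ X.oneH) ⊗ₜ (b ⊗ₜ X.oneH)) = X.mulA (a ⊗ₜ b) := by
  rw [cross_tmul, hX.crossOne_oneH, projA_tmul, hX.bialgebraH.counit_one, one_smul]

lemma mulB_tmul_oneH (hX : X.IsBiproduct) (a b : A) (g : H) :
    X.mulB ((a ⊗ₜ X.oneH) ⊗ₜ (b ⊗ₜ g)) = X.mulA (a ⊗ₜ b) ⊗ₜ g := by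
  conv_rhs => rw [← lid_counit_comul (R := R) g]
  rw [mulB_tmul, hX.rightCoact_tmul_one, rightCoact_tmul]
  hopf_tensor_induction comul (R := R) g with g₁ g₂
  simp [cross_tmul, hX.crossOne_oneH, hX.one_mulH, smul_tmul]

lemma mulB_tmul_oneH_oneA_tmul (hX : X.IsBiproduct) (a : A) (g : H) :
    X.mulB ((a ⊗ₜ X.oneH) ⊗ₜ (X.oneA ⊗ₜ g)) = a ⊗ₜ g := by
  rw [hX.mulB_tmul_oneH, hX.mulA_one]

lemma mulB_oneA_tmul (hX : X.IsBiproduct) (h : H) (y : A ⊗[R] H) :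
    X.mulB ((X.oneA ⊗ₜ h) ⊗ₜ y) = tensorMul X.crossOne X.mulH (comul h ⊗ₜ rightCoact y) := by
  rw [mulB_tmul, rightCoact_tmul]
  hopf_tensor_induction comul (R := R) h with h₁ h₂
  hopf_tensor_induction rightCoact (R := R) y with z g
  simp [hX.cross_one_tmul]

lemma mulB_oneA_tmul_tmul_oneH (hX : X.IsBiproduct) (h : H) (b : A) :
    X.mulB ((X.oneA ⊗ₜ h) ⊗ₜ (b ⊗ₜ X.oneH)) =
      map (X.act ∘ₗ (TensorProduct.mk R H A).flip b) LinearMap.id (comul h) := by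
  rw [hX.mulB_oneA_tmul, hX.rightCoact_tmul_one]
  hopf_tensor_induction comul (R := R) h with h₁ h₂
  simp [hX.crossOne_tmul_oneH, hX.mulH_one]

lemma mulB_oneA_tmul_oneA_tmul (hX : X.IsBiproduct) (h g : H) :
    X.mulB ((X.oneA ⊗ₜ h) ⊗ₜ (X.oneA ⊗ₜ g)) = map X.cocycle X.mulH (comul (h ⊗ₜ[R] g)) := by
  rw [hX.mulB_oneA_tmul, rightCoact_tmul, comul_tmul]
  hopf_tensor_induction comul (R := R) h with h₁ h₂
  hopf_tensor_induction comul (R := R) g with g₁ g₂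
  simp [hX.crossOne_tmul_oneA]

end IsBiproduct

variable (X)

variable [Coalgebra R A]

/-- The smash coproduct comultiplication on `A ⊗ H`. -/
def comulB : A ⊗[R] H →ₗ[R] (A ⊗[R] H) ⊗[R] (A ⊗[R] H) :=
  tensorMul X.mulRight LinearMap.id ∘ₗ map X.comulCoact comul

lemma comulB_tmul (a : A) (h : H) :
    X.comulB (a ⊗ₜ h) = tensorMul X.mulRight LinearMap.id (X.comulCoact a ⊗ₜ comul h) := rfl

/-- The twisted comodule cocycle condition, with the product `a₁σ(a₂₍₋₁₎₁, g₁) ⊗ a₂₍₋₁₎₂g₂` written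
as the crossed product `(a₁ ⊗ a₂₍₋₁₎)(1 ⊗ g)`. -/
def IsTwisted : Prop := ∀ (a : A) (g : H),
  map (X.mulB ∘ₗ (TensorProduct.mk R (A ⊗[R] H) (A ⊗[R] H)).flip (X.oneA ⊗ₜ g)) LinearMap.id
      (X.comulCoact a) =
    map (X.mulRight ∘ₗ (TensorProduct.mk R (A ⊗[R] H) H).flip g) LinearMap.id (X.comulCoact a)

/-- The untwisted conditions (A1), (A2) and the counit part of (A3). -/
structure CounitCompat : Prop where
  counit_mulA : ∀ a b, counit (R := R) (X.mulA (a ⊗ₜ b)) = counit (R := R) a * counit (R := R) b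
  counit_oneA : counit (R := R) X.oneA = 1
  counit_act : ∀ h a, counit (R := R) (X.act (h ⊗ₜ a)) = counit (R := R) h * counit (R := R) a
  counit_cocycle : ∀ h g,
    counit (R := R) (X.cocycle (h ⊗ₜ g)) = counit (R := R) h * counit (R := R) g

/-- The untwisted condition (A4) and the unit part of (A5). -/
structure UnitCompat : Prop where
  comul_oneA : comul (R := R) X.oneA = X.oneA ⊗ₜ X.oneA
  coact_oneA : X.coact X.oneA = X.oneH ⊗ₜ X.oneA

/-- The multiplicative parts of the untwisted conditions (A3) and (A5)–(A9). -/
structure MulCompat : Prop where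
  comul_cocycle : ∀ c, comul (R := R) (X.cocycle c) = map X.cocycle X.cocycle (comul c)
  coact_mulA : ∀ a b,
    X.coact (X.mulA (a ⊗ₜ b)) = tensorMul X.mulH X.mulA (X.coact a ⊗ₜ X.coact b)
  coact_cocycle : ∀ c, X.coactMul (map (X.coact ∘ₗ X.cocycle) X.mulH (comul c)) =
    map X.mulH X.cocycle (comul c)
  comul_mulA : ∀ a b, comul (R := R) (X.mulA (a ⊗ₜ b)) =
    tensorMul X.cross X.mulA (X.comulCoact a ⊗ₜ X.comulCoact b)
  comul_act : ∀ h b, comul (R := R) (X.act (h ⊗ₜ b)) =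
    tensorMul X.crossOne X.act (comul h ⊗ₜ X.comulCoact b)
  coact_act : ∀ h b,
    X.coactAct (comul h ⊗ₜ b) = tensorMul X.mulH X.act (comul h ⊗ₜ X.coact b)

variable {X}

lemma comulB_map_act (hm : X.MulCompat) (h : H) (b : A) :
    X.comulB (map (X.act ∘ₗ (TensorProduct.mk R H A).flip b) LinearMap.id (comul h)) =
      X.actShuffle X.coactAct (comul₄ R H h ⊗ₜ X.comulCoact b) := by
  rw [comul₄_eq]
  hopf_tensor_induction comul (R := R) h with h₁ h₂
  simp only [map_tmul, comulB_tmul, LinearMap.comp_apply, LinearMap.flip_apply, mk_apply,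
    comulCoact_apply X (X.act _), hm.comul_act]
  hopf_tensor_induction comul (R := R) h₁ with h₁₁ h₁₂
  hopf_tensor_induction comul (R := R) h₂ with h₂₁ h₂₂
  hopf_tensor_induction X.comulCoact b with u b'
  simp only [map_tmul, assoc_tmul, LinearMap.id_apply, LinearEquiv.coe_coe, assoc_symm_tmul,
    actShuffle_tmul, tensorMul_tmul, coactAct_tmul]
  hopf_tensor_induction X.coact (X.act (h₁₂ ⊗ₜ b')) with g w
  simp

lemma counit_crossOne (hc : X.CounitCompat) (h : H) (y : A ⊗[R] H) :
    counit (R := R) (X.crossOne (h ⊗ₜ y)) = counit (R := R) h * counit (R := R) y := by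
  hopf_tensor_induction y with b g
  conv_rhs => rw [← lid_counit_comul (R := R) h]
  rw [crossOne_tmul]
  hopf_tensor_induction comul (R := R) h with h₁ h₂
  simp only [tensorMul_tmul, hc.counit_mulA, hc.counit_act, hc.counit_cocycle, map_tmul,
    LinearMap.id_apply, lid_tmul, map_smul, smul_eq_mul, counit_tmul]
  ring

lemma counit_cross (hc : X.CounitCompat) (x y : A ⊗[R] H) :
    counit (R := R) (X.cross (x ⊗ₜ y)) = counit (R := R) x * counit (R := R) y := by
  hopf_tensor_induction x with a h
  rw [cross_tmul, hc.counit_mulA, counit_crossOne hc, counit_tmul, smul_eq_mul]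
  ring

lemma counit_projA (x : A ⊗[R] H) : counit (R := R) (projA x) = counit (R := R) x := by
  hopf_tensor_induction x with a h
  simp

lemma projH_mulB (hc : X.CounitCompat) (x y : A ⊗[R] H) :
    projH (X.mulB (x ⊗ₜ y)) = X.mulH (projH x ⊗ₜ projH y) := by
  hopf_tensor_induction x with a h
  hopf_tensor_induction y with b g
  trans TensorProduct.lid R H ((counit (R := R) a * counit (R := R) b) ⊗ₜ
    X.mulH (TensorProduct.lid R H (map counit LinearMap.id (comul h)) ⊗ₜ
      TensorProduct.lid R H (map counit LinearMap.id (comul g))))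
  · rw [mulB_tmul, rightCoact_tmul, rightCoact_tmul]
    hopf_tensor_induction comul (R := R) h with h₁ h₂
    hopf_tensor_induction comul (R := R) g with g₁ g₂
    simp [counit_cross hc, smul_smul, ← smul_tmul', mul_comm, mul_left_comm, mul_assoc]
  · rw [lid_counit_comul, lid_counit_comul]
    simp [← smul_tmul', smul_smul, mul_comm]

lemma map_projH_projA_comulB (x : A ⊗[R] H) :
    map projH projA (X.comulB x) = X.coactMul (map X.coact LinearMap.id x) := by
  hopf_tensor_induction x with a h
  trans X.coactMul (X.coact (TensorProduct.lid R A (map counit LinearMap.id (comul a))) ⊗ₜ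
    TensorProduct.rid R H (map LinearMap.id counit (comul h)))
  · rw [comulB_tmul, comulCoact_apply]
    hopf_tensor_induction comul (R := R) h with h₁ h₂
    hopf_tensor_induction comul (R := R) a with a₁ a₂
    trans TensorProduct.lid R (H ⊗[R] A)
      ((counit (R := R) h₂ * counit (R := R) a₁) ⊗ₜ X.coactMul (X.coact a₂ ⊗ₜ h₁))
    · rw [map_tmul]
      hopf_tensor_induction X.coact a₂ with n w
      simp [← smul_tmul', smul_smul]
    · simp [← smul_tmul', smul_smul]
  · rw [lid_counit_comul, rid_counit_comul, map_tmul, LinearMap.id_apply]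

namespace IsBiproduct

lemma rightCoact_comulCoact (hX : X.IsBiproduct) (a : A) :
    map rightCoact LinearMap.id (X.comulCoact a) =
      (TensorProduct.assoc R (A ⊗[R] H) H A).symm
        (map LinearMap.id X.coact (X.comulCoact a)) := by
  rw [comulCoact_apply]
  hopf_tensor_induction comul (R := R) a with a₁ a₂
  let e : H ⊗[R] (H ⊗[R] A) →ₗ[R] ((A ⊗[R] H) ⊗[R] H) ⊗[R] A :=
    (TensorProduct.assoc R (A ⊗[R] H) H A).symm.toLinearMap ∘ₗ
      (TensorProduct.assoc R A H (H ⊗[R] A)).symm.toLinearMap ∘ₗ TensorProduct.mk R A _ a₁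
  trans e (TensorProduct.assoc R H H A (map comul LinearMap.id (X.coact a₂)))
  · rw [map_tmul]
    hopf_tensor_induction X.coact a₂ with h a
    simp only [LinearMap.id_apply, assoc_symm_tmul, map_tmul, rightCoact_tmul]
    hopf_tensor_induction comul (R := R) h with h₁ h₂
    rfl
  · rw [hX.coact_coassoc, map_tmul]
    hopf_tensor_induction X.coact a₂ with h a
    rfl

lemma comulB_oneA_tmul (hX : X.IsBiproduct) (hu : X.UnitCompat) (h : H) :
    X.comulB (X.oneA ⊗ₜ h) =
      map (TensorProduct.mk R A H X.oneA) (TensorProduct.mk R A H X.oneA) (comul h) := by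
  rw [comulB_tmul, comulCoact_apply, hu.comul_oneA, map_tmul, hu.coact_oneA, LinearMap.id_apply,
    assoc_symm_tmul]
  hopf_tensor_induction comul (R := R) h with h₁ h₂
  simp [hX.one_mulH]

lemma comulB_tmul_oneH (hX : X.IsBiproduct) (a : A) :
    X.comulB (a ⊗ₜ X.oneH) =
      map LinearMap.id ((TensorProduct.mk R A H).flip X.oneH) (X.comulCoact a) := by
  rw [comulB_tmul, hX.bialgebraH.comul_one]
  hopf_tensor_induction X.comulCoact a with u b
  simp [hX.mulRight_one]

lemma comulB_tmul_eq (hX : X.IsBiproduct) (ht : X.IsTwisted) (hu : X.UnitCompat) (a : A) (g : H) :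
    X.comulB (a ⊗ₜ g) =
      tensorMul X.mulB X.mulB (X.comulB (a ⊗ₜ X.oneH) ⊗ₜ X.comulB (X.oneA ⊗ₜ g)) := by
  rw [comulB_tmul, hX.comulB_tmul_oneH, hX.comulB_oneA_tmul hu]
  hopf_tensor_induction comul (R := R) g with g₁ g₂
  have htwist := congr(map LinearMap.id ((TensorProduct.mk R A H).flip g₂) $(ht a g₁))
  convert htwist.symm using 1
  all_goals
    hopf_tensor_induction X.comulCoact a with u b
    simp [hX.mulB_tmul_oneH_oneA_tmul]

lemma comulCoact_mulA (hX : X.IsBiproduct) (hm : X.MulCompat) (a b : A) :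
    X.comulCoact (X.mulA (a ⊗ₜ b)) =
      tensorMul X.mulB X.mulA (X.comulCoact a ⊗ₜ X.comulCoact b) := by
  trans tensorMul (tensorMul X.cross X.mulH) X.mulA
    (map rightCoact LinearMap.id (X.comulCoact a) ⊗ₜ map rightCoact LinearMap.id (X.comulCoact b))
  · rw [hX.rightCoact_comulCoact, hX.rightCoact_comulCoact, comulCoact_apply, hm.comul_mulA]
    hopf_tensor_induction X.comulCoact a with u a'
    hopf_tensor_induction X.comulCoact b with v b'
    simp only [tensorMul_tmul, map_tmul, LinearMap.id_apply, hm.coact_mulA]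
    hopf_tensor_induction X.coact a' with h a''
    hopf_tensor_induction X.coact b' with g b''
    simp
  · hopf_tensor_induction X.comulCoact a with u a'
    hopf_tensor_induction X.comulCoact b with v b'
    simp [mulB_tmul]

lemma comulB_mulA_tmul_oneH (hX : X.IsBiproduct) (hm : X.MulCompat) (a b : A) :
    X.comulB (X.mulA (a ⊗ₜ b) ⊗ₜ X.oneH) =
      tensorMul X.mulB X.mulB (X.comulB (a ⊗ₜ X.oneH) ⊗ₜ X.comulB (b ⊗ₜ X.oneH)) := by
  simp only [hX.comulB_tmul_oneH, hX.comulCoact_mulA hm]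
  hopf_tensor_induction X.comulCoact a with u a'
  hopf_tensor_induction X.comulCoact b with v b'
  simp [hX.mulB_tmul_oneH]

lemma tensorMul_mulB_oneA_tmul_oneA_tmul (hX : X.IsBiproduct) (hu : X.UnitCompat) (h g : H) :
    tensorMul X.mulB X.mulB (X.comulB (X.oneA ⊗ₜ h) ⊗ₜ X.comulB (X.oneA ⊗ₜ g)) =
      reassoc (map X.cocycle (map (map X.mulH X.cocycle) X.mulH)
        (comul₄ R (H ⊗[R] H) (h ⊗ₜ g))) := by
  trans map (map X.cocycle X.mulH) (map X.cocycle X.mulH)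
    (map comul comul (comul (R := R) (h ⊗ₜ[R] g)))
  · rw [hX.comulB_oneA_tmul hu, hX.comulB_oneA_tmul hu, comul_tmul]
    hopf_tensor_induction comul (R := R) h with h₁ h₂
    hopf_tensor_induction comul (R := R) g with g₁ g₂
    simp [hX.mulB_oneA_tmul_oneA_tmul]
  · rw [comul₄_eq]
    hopf_tensor_induction comul (R := R) (h ⊗ₜ[R] g) with c₁ c₂
    rw [map_tmul]
    hopf_tensor_induction comul (R := R) c₁ with c₁₁ c₁₂
    hopf_tensor_induction comul (R := R) c₂ with c₂₁ c₂₂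
    simp

lemma comulB_map_cocycle_mulH (hX : X.IsBiproduct) (hm : X.MulCompat) (c : H ⊗[R] H) :
    X.comulB (map X.cocycle X.mulH (comul c)) =
      reassoc (map X.cocycle (map (X.coactMul ∘ₗ map (X.coact ∘ₗ X.cocycle) X.mulH) X.mulH)
        (comul₄ R (H ⊗[R] H) c)) := by
  have comul_mulH (d : H ⊗[R] H) : comul (X.mulH d) = map X.mulH X.mulH (comul d) := by
    hopf_tensor_induction d with h g
    exact hX.bialgebraH.comul_mul h g
  rw [comul₄_eq]
  hopf_tensor_induction comul (R := R) c with c₁ c₂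
  simp only [map_tmul, comulB_tmul, comul_mulH, comulCoact_apply, hm.comul_cocycle]
  hopf_tensor_induction comul (R := R) c₁ with c₁₁ c₁₂
  hopf_tensor_induction comul (R := R) c₂ with c₂₁ c₂₂
  simp only [map_tmul, assoc_tmul, LinearMap.id_apply, LinearEquiv.coe_coe, assoc_symm_tmul,
    LinearMap.comp_apply]
  hopf_tensor_induction X.coact (X.cocycle c₁₂) with h a
  simp

lemma comulB_map_cocycle_mulH_eq (hX : X.IsBiproduct) (hu : X.UnitCompat) (hm : X.MulCompat)
    (h g : H) : X.comulB (map X.cocycle X.mulH (comul (h ⊗ₜ[R] g))) =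
      tensorMul X.mulB X.mulB (X.comulB (X.oneA ⊗ₜ h) ⊗ₜ X.comulB (X.oneA ⊗ₜ g)) := by
  rw [hX.tensorMul_mulB_oneA_tmul_oneA_tmul hu, hX.comulB_map_cocycle_mulH hm, comul₄]
  simp only [LinearMap.comp_apply]
  hopf_tensor_induction comul (R := R) (h ⊗ₜ[R] g) with c₁ c₂
  simp only [map_tmul, LinearMap.comp_apply]
  hopf_tensor_induction comul (R := R) c₂ with c₂₁ c₂₂
  simp only [map_tmul, LinearMap.comp_apply, hm.coact_cocycle]

lemma tensorMul_mulB_oneA_tmul_tmul_oneH (hX : X.IsBiproduct) (hu : X.UnitCompat) (h : H) (b : A) :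
    tensorMul X.mulB X.mulB (X.comulB (X.oneA ⊗ₜ h) ⊗ₜ X.comulB (b ⊗ₜ X.oneH)) =
      X.actShuffle (tensorMul X.mulH X.act ∘ₗ map LinearMap.id X.coact)
        (comul₄ R H h ⊗ₜ X.comulCoact b) := by
  trans tensorMul (tensorMul X.crossOne X.mulH)
    (map X.act LinearMap.id ∘ₗ (TensorProduct.rightComm R H H A).toLinearMap)
    (map comul comul (comul (R := R) h) ⊗ₜ map rightCoact LinearMap.id (X.comulCoact b))
  · rw [hX.comulB_oneA_tmul hu, hX.comulB_tmul_oneH]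
    hopf_tensor_induction comul (R := R) h with h₁ h₂
    hopf_tensor_induction X.comulCoact b with u b'
    simp only [map_tmul, mk_apply, LinearMap.flip_apply, LinearMap.id_apply, tensorMul_tmul,
      hX.mulB_oneA_tmul, hX.rightCoact_tmul_one]
    hopf_tensor_induction comul (R := R) h₂ with h₂₁ h₂₂
    simp [hX.crossOne_tmul_oneH, hX.mulH_one]
  · rw [hX.rightCoact_comulCoact, comul₄_eq]
    hopf_tensor_induction comul (R := R) h with h₁ h₂
    rw [map_tmul]
    hopf_tensor_induction comul (R := R) h₁ with h₁₁ h₁₂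
    hopf_tensor_induction comul (R := R) h₂ with h₂₁ h₂₂
    hopf_tensor_induction X.comulCoact b with u b'
    simp only [map_tmul, assoc_tmul, LinearMap.id_apply, LinearEquiv.coe_coe, assoc_symm_tmul,
      actShuffle_tmul, LinearMap.comp_apply]
    hopf_tensor_induction X.coact b' with g w
    simp

lemma comulB_map_act_eq (hX : X.IsBiproduct) (hu : X.UnitCompat) (hm : X.MulCompat)
    (h : H) (b : A) :
    X.comulB (map (X.act ∘ₗ (TensorProduct.mk R H A).flip b) LinearMap.id (comul h)) =
      tensorMul X.mulB X.mulB (X.comulB (X.oneA ⊗ₜ h) ⊗ₜ X.comulB (b ⊗ₜ X.oneH)) := by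
  rw [hX.tensorMul_mulB_oneA_tmul_tmul_oneH hu, comulB_map_act hm]
  exact X.actShuffle_comul₄_congr hm.coact_act h (X.comulCoact b)

theorem comulB_mulB (hX : X.IsBiproduct) (ht : X.IsTwisted) (hu : X.UnitCompat) (hm : X.MulCompat)
    (x y : A ⊗[R] H) :
    X.comulB (X.mulB (x ⊗ₜ y)) = tensorMul X.mulB X.mulB (X.comulB x ⊗ₜ X.comulB y) := by
  have hassoc := tensorMul_assoc hX.mulB_assoc
  have hsplit := hX.comulB_tmul_eq ht hu
  have hleft (a : A) (y : A ⊗[R] H) : X.comulB (X.mulB ((a ⊗ₜ X.oneH) ⊗ₜ y)) =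
      tensorMul X.mulB X.mulB (X.comulB (a ⊗ₜ X.oneH) ⊗ₜ X.comulB y) := by
    hopf_tensor_induction y with b g
    rw [hX.mulB_tmul_oneH, hsplit, hsplit b, hX.comulB_mulA_tmul_oneH hm, hassoc]
  have hright (x : A ⊗[R] H) (g : H) : X.comulB (X.mulB (x ⊗ₜ (X.oneA ⊗ₜ g))) =
      tensorMul X.mulB X.mulB (X.comulB x ⊗ₜ X.comulB (X.oneA ⊗ₜ g)) := by
    hopf_tensor_induction x with a h
    rw [← hX.mulB_tmul_oneH_oneA_tmul a h, hX.mulB_assoc, hleft, hX.mulB_oneA_tmul_oneA_tmul,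
      hX.comulB_map_cocycle_mulH_eq hu hm, ← hassoc, ← hleft]
  hopf_tensor_induction x with a h
  hopf_tensor_induction y with b g
  rw [← hX.mulB_tmul_oneH_oneA_tmul a h, ← hX.mulB_tmul_oneH_oneA_tmul b g, hX.mulB_assoc, hleft,
    ← hX.mulB_assoc, hright, hX.mulB_oneA_tmul_tmul_oneH, hX.comulB_map_act_eq hu hm, hleft, hright,
    hassoc, hassoc]

lemma counit_mulB (hX : X.IsBiproduct) (hc : X.CounitCompat) (x y : A ⊗[R] H) :
    counit (R := R) (X.mulB (x ⊗ₜ y)) = counit (R := R) x * counit (R := R) y := by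
  rw [← counit_projA, hX.projA_mulB, counit_cross hc]

lemma counitCompat (hX : X.IsBiproduct)
    (hmul : ∀ x y, counit (R := R) (X.mulB (x ⊗ₜ y)) = counit (R := R) x * counit (R := R) y)
    (hone : counit (R := R) (X.oneA ⊗ₜ[R] X.oneH) = 1) : X.CounitCompat := by
  have hA : counit (R := R) X.oneA = 1 := by
    simpa [hX.bialgebraH.counit_one] using hone
  have hcross (x y : A ⊗[R] H) :
      counit (R := R) (X.cross (x ⊗ₜ y)) = counit (R := R) x * counit (R := R) y := by
    rw [← hX.projA_mulB, counit_projA, hmul]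
  refine ⟨fun a b ↦ ?_, hA, fun h b ↦ ?_, fun h g ↦ ?_⟩
  · rw [← hX.cross_tmul_oneH, hcross]
    simp [hX.bialgebraH.counit_one]
  · rw [← hX.crossOne_tmul_oneH, ← hX.cross_one_tmul, hcross]
    simp [hX.bialgebraH.counit_one, hA]
  · rw [← hX.crossOne_tmul_oneA, ← hX.cross_one_tmul, hcross]
    simp [hA]

lemma comulB_one (hX : X.IsBiproduct) (hu : X.UnitCompat) :
    X.comulB (X.oneA ⊗ₜ X.oneH) = (X.oneA ⊗ₜ X.oneH) ⊗ₜ (X.oneA ⊗ₜ X.oneH) := by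
  rw [hX.comulB_oneA_tmul hu, hX.bialgebraH.comul_one, map_tmul, mk_apply]

lemma map_projA_projA_comulB (hX : X.IsBiproduct) (x : A ⊗[R] H) :
    map projA projA (X.comulB x) = comul (R := R) (projA x) := by
  have hlid : (TensorProduct.lid R A).toLinearMap ∘ₗ map counit LinearMap.id ∘ₗ X.coact =
      LinearMap.id := LinearMap.ext hX.counit_coact
  hopf_tensor_induction x with a h
  trans TensorProduct.lid R (A ⊗[R] A)
    (counit (R := R) (TensorProduct.lid R H (map counit LinearMap.id (comul h))) ⊗ₜ
      map LinearMap.id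
        ((TensorProduct.lid R A).toLinearMap ∘ₗ map counit LinearMap.id ∘ₗ X.coact) (comul a))
  · rw [comulB_tmul, comulCoact_apply]
    hopf_tensor_induction comul (R := R) h with h₁ h₂
    hopf_tensor_induction comul (R := R) a with a₁ a₂
    simp only [map_tmul, LinearMap.comp_apply]
    hopf_tensor_induction X.coact a₂ with n w
    simp [hX.bialgebraH.counit_mul, ← smul_tmul', smul_smul, mul_comm, mul_left_comm]
  · rw [lid_counit_comul, hlid, map_id, LinearMap.id_apply, projA_tmul, map_smul, lid_tmul]

lemma unitCompat (hX : X.IsBiproduct) (hc : X.CounitCompat)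
    (hone : X.comulB (X.oneA ⊗ₜ X.oneH) = (X.oneA ⊗ₜ X.oneH) ⊗ₜ (X.oneA ⊗ₜ X.oneH)) :
    X.UnitCompat := by
  constructor
  · have hAA := hX.map_projA_projA_comulB (X.oneA ⊗ₜ X.oneH)
    rw [hone] at hAA
    simpa [hX.bialgebraH.counit_one] using hAA.symm
  · have hHA := map_projH_projA_comulB (X := X) (X.oneA ⊗ₜ X.oneH)
    rw [hone, map_tmul X.coact, LinearMap.id_apply, hX.coactMul_one] at hHA
    simpa [hX.bialgebraH.counit_one, hc.counit_oneA] using hHA.symm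

lemma map_projH_projA_tensorMul_mulB (hX : X.IsBiproduct) (hc : X.CounitCompat)
    (s t : (A ⊗[R] H) ⊗[R] (A ⊗[R] H)) :
    map projH projA (tensorMul X.mulB X.mulB (s ⊗ₜ t)) =
      tensorMul X.mulH X.cross (map projH LinearMap.id s ⊗ₜ map projH LinearMap.id t) := by
  hopf_tensor_induction s with x₁ x₂
  hopf_tensor_induction t with y₁ y₂
  simp [hX.projA_mulB, projH_mulB hc]

lemma map_projH_comulB_tmul_oneH (hX : X.IsBiproduct) (a : A) :
    map projH LinearMap.id (X.comulB (a ⊗ₜ X.oneH)) =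
      map LinearMap.id ((TensorProduct.mk R A H).flip X.oneH) (X.coact a) := by
  rw [hX.comulB_tmul_oneH, ← map_projH_comulCoact X a, map_map, map_map]
  rfl

lemma map_projH_comulB_oneA_tmul (hX : X.IsBiproduct) (hc : X.CounitCompat) (hu : X.UnitCompat)
    (h : H) : map projH LinearMap.id (X.comulB (X.oneA ⊗ₜ h)) =
      map LinearMap.id (TensorProduct.mk R A H X.oneA) (comul h) := by
  rw [hX.comulB_oneA_tmul hu]
  hopf_tensor_induction comul (R := R) h with h₁ h₂
  simp [hc.counit_oneA]

lemma comul_cross (hX : X.IsBiproduct)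
    (hmul : ∀ x y, X.comulB (X.mulB (x ⊗ₜ y)) = tensorMul X.mulB X.mulB (X.comulB x ⊗ₜ X.comulB y))
    (x y : A ⊗[R] H) :
    comul (R := R) (X.cross (x ⊗ₜ y)) = tensorMul X.cross X.cross (X.comulB x ⊗ₜ X.comulB y) := by
  rw [← hX.projA_mulB, ← hX.map_projA_projA_comulB, hmul, hX.map_projA_projA_tensorMul_mulB]

lemma coactMul_map_coact_mulB (hX : X.IsBiproduct) (hc : X.CounitCompat)
    (hmul : ∀ x y, X.comulB (X.mulB (x ⊗ₜ y)) = tensorMul X.mulB X.mulB (X.comulB x ⊗ₜ X.comulB y))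
    (x y : A ⊗[R] H) :
    X.coactMul (map X.coact LinearMap.id (X.mulB (x ⊗ₜ y))) = tensorMul X.mulH X.cross
      (map projH LinearMap.id (X.comulB x) ⊗ₜ map projH LinearMap.id (X.comulB y)) := by
  rw [← map_projH_projA_comulB, hmul, hX.map_projH_projA_tensorMul_mulB hc]

lemma coact_mulA_of_comulB_mulB (hX : X.IsBiproduct) (hc : X.CounitCompat)
    (hmul : ∀ x y, X.comulB (X.mulB (x ⊗ₜ y)) = tensorMul X.mulB X.mulB (X.comulB x ⊗ₜ X.comulB y))
    (a b : A) : X.coact (X.mulA (a ⊗ₜ b)) = tensorMul X.mulH X.mulA (X.coact a ⊗ₜ X.coact b) := by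
  trans X.coactMul (map X.coact LinearMap.id (X.mulB ((a ⊗ₜ X.oneH) ⊗ₜ (b ⊗ₜ X.oneH))))
  · rw [hX.mulB_tmul_oneH, map_tmul, LinearMap.id_apply, hX.coactMul_one]
  · rw [hX.coactMul_map_coact_mulB hc hmul, hX.map_projH_comulB_tmul_oneH,
      hX.map_projH_comulB_tmul_oneH]
    hopf_tensor_induction X.coact a with h a'
    hopf_tensor_induction X.coact b with g b'
    simp [hX.cross_tmul_oneH]

lemma coact_cocycle_of_comulB_mulB (hX : X.IsBiproduct) (hc : X.CounitCompat) (hu : X.UnitCompat)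
    (hmul : ∀ x y, X.comulB (X.mulB (x ⊗ₜ y)) = tensorMul X.mulB X.mulB (X.comulB x ⊗ₜ X.comulB y))
    (c : H ⊗[R] H) : X.coactMul (map (X.coact ∘ₗ X.cocycle) X.mulH (comul c)) =
      map X.mulH X.cocycle (comul c) := by
  hopf_tensor_induction c with h g
  trans X.coactMul (map X.coact LinearMap.id (X.mulB ((X.oneA ⊗ₜ h) ⊗ₜ (X.oneA ⊗ₜ g))))
  · rw [hX.mulB_oneA_tmul_oneA_tmul, map_map, LinearMap.id_comp]
  · rw [hX.coactMul_map_coact_mulB hc hmul, hX.map_projH_comulB_oneA_tmul hc hu,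
      hX.map_projH_comulB_oneA_tmul hc hu, comul_tmul]
    hopf_tensor_induction comul (R := R) h with h₁ h₂
    hopf_tensor_induction comul (R := R) g with g₁ g₂
    simp [hX.cross_one_tmul, hX.crossOne_tmul_oneA]

lemma coact_act_of_comulB_mulB (hX : X.IsBiproduct) (hc : X.CounitCompat) (hu : X.UnitCompat)
    (hmul : ∀ x y, X.comulB (X.mulB (x ⊗ₜ y)) = tensorMul X.mulB X.mulB (X.comulB x ⊗ₜ X.comulB y))
    (h : H) (b : A) :
    X.coactAct (comul h ⊗ₜ b) = tensorMul X.mulH X.act (comul h ⊗ₜ X.coact b) := by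
  trans X.coactMul (map X.coact LinearMap.id (X.mulB ((X.oneA ⊗ₜ h) ⊗ₜ (b ⊗ₜ X.oneH))))
  · rw [hX.mulB_oneA_tmul_tmul_oneH]
    hopf_tensor_induction comul (R := R) h with h₁ h₂
    simp
  · rw [hX.coactMul_map_coact_mulB hc hmul, hX.map_projH_comulB_oneA_tmul hc hu,
      hX.map_projH_comulB_tmul_oneH]
    hopf_tensor_induction comul (R := R) h with h₁ h₂
    hopf_tensor_induction X.coact b with g b'
    simp [hX.cross_one_tmul, hX.crossOne_tmul_oneH]

theorem mulCompat (hX : X.IsBiproduct) (hc : X.CounitCompat) (hu : X.UnitCompat)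
    (hmul : ∀ x y,
      X.comulB (X.mulB (x ⊗ₜ y)) = tensorMul X.mulB X.mulB (X.comulB x ⊗ₜ X.comulB y)) :
    X.MulCompat where
  comul_cocycle c := by
    hopf_tensor_induction c with h g
    rw [← hX.crossOne_tmul_oneA, ← hX.cross_one_tmul, hX.comul_cross hmul, hX.comulB_oneA_tmul hu,
      hX.comulB_oneA_tmul hu, comul_tmul]
    hopf_tensor_induction comul (R := R) h with h₁ h₂
    hopf_tensor_induction comul (R := R) g with g₁ g₂
    simp [hX.cross_one_tmul, hX.crossOne_tmul_oneA]
  coact_mulA := hX.coact_mulA_of_comulB_mulB hc hmul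
  coact_cocycle := hX.coact_cocycle_of_comulB_mulB hc hu hmul
  comul_mulA a b := by
    rw [← hX.cross_tmul_oneH, hX.comul_cross hmul, hX.comulB_tmul_oneH, hX.comulB_tmul_oneH]
    hopf_tensor_induction X.comulCoact a with u a'
    hopf_tensor_induction X.comulCoact b with v b'
    simp [hX.cross_tmul_oneH]
  comul_act h b := by
    rw [← hX.crossOne_tmul_oneH, ← hX.cross_one_tmul, hX.comul_cross hmul, hX.comulB_oneA_tmul hu,
      hX.comulB_tmul_oneH]
    hopf_tensor_induction comul (R := R) h with h₁ h₂
    hopf_tensor_induction X.comulCoact b with v b'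
    simp [hX.cross_one_tmul, hX.crossOne_tmul_oneH]
  coact_act := hX.coact_act_of_comulB_mulB hc hu hmul

theorem isBialgebraStr_iff (hX : X.IsBiproduct) (ht : X.IsTwisted) :
    IsBialgebraStr X.mulB (X.oneA ⊗ₜ X.oneH) X.comulB (counit (R := R)) ↔
      X.CounitCompat ∧ X.UnitCompat ∧ X.MulCompat := by
  constructor
  · rintro ⟨hmul, hone, hcounit_mul, hcounit_one⟩
    have hc := hX.counitCompat hcounit_mul hcounit_one
    have hu := hX.unitCompat hc hone
    exact ⟨hc, hu, hX.mulCompat hc hu hmul⟩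
  · rintro ⟨hc, hu, hm⟩
    exact ⟨hX.comulB_mulB ht hu hm, hX.comulB_one hu, hX.counit_mulB hc, by
      simp [hX.bialgebraH.counit_one, hc.counit_oneA]⟩

end IsBiproduct

end BiproductData

section Zpow

variable {R V V' W : Type*} [CommSemiring R] [AddCommMonoid V] [Module R V]
  [AddCommMonoid V'] [Module R V'] [AddCommMonoid W] [Module R W]
  {e : V ≃ₗ[R] V} {e' : V' ≃ₗ[R] V'} {d : W ≃ₗ[R] W}

lemma zpow_zpow_apply (i j : ℤ) (x : V) : (e ^ i) ((e ^ j) x) = (e ^ (i + j)) x := by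
  rw [zpow_add, LinearEquiv.mul_apply]

lemma zpow_apply_of_eq_zero {i : ℤ} (hi : i = 0) (x : V) : (e ^ i) x = x := by
  rw [hi, zpow_zero, LinearEquiv.coe_one, id]

lemma apply_eq_zpow_one (e : V ≃ₗ[R] V) (x : V) : e x = (e ^ (1 : ℤ)) x := by rw [zpow_one]

lemma symm_apply_eq_zpow_neg_one (e : V ≃ₗ[R] V) (x : V) : e.symm x = (e ^ (-1 : ℤ)) x := by
  rw [zpow_neg_one, LinearEquiv.coe_inv]

lemma apply_zpow_of_apply {f : V →ₗ[R] W} (h : ∀ x, f (e x) = d (f x)) (n : ℤ) (x : V) :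
    f ((e ^ n) x) = (d ^ n) (f x) := by
  induction n generalizing x with
  | zero => simp only [zpow_zero, LinearEquiv.coe_one, id]
  | succ n ih =>
    rw [zpow_add_one, zpow_add_one, LinearEquiv.mul_apply, ih, h, LinearEquiv.mul_apply]
  | pred n ih =>
    have hinv : f (e⁻¹ x) = d⁻¹ (f x) :=
      (LinearEquiv.eq_symm_apply _).2 ((h _).symm.trans (congrArg f (e.apply_symm_apply x)))
    rw [zpow_sub_one, zpow_sub_one, LinearEquiv.mul_apply, ih, LinearEquiv.mul_apply, hinv]

lemma zpow_apply_of_fixed {x : V} (h : e x = x) (n : ℤ) : (e ^ n) x = x := by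
  have hn := apply_zpow_of_apply (e := (1 : R ≃ₗ[R] R)) (d := e)
    (f := LinearMap.toSpanSingleton R V x) (by simp [h]) n 1
  simpa using hn.symm

lemma apply_zpow_tmul_zpow_of_apply {f : V ⊗[R] V' →ₗ[R] W}
    (h : ∀ x y, f (e x ⊗ₜ e' y) = d (f (x ⊗ₜ y))) (n : ℤ) (x : V) (y : V') :
    f ((e ^ n) x ⊗ₜ (e' ^ n) y) = (d ^ n) (f (x ⊗ₜ y)) := by
  have hcongr (t : V ⊗[R] V') : f (TensorProduct.congr e e' t) = d (f t) := by
    hopf_tensor_induction t with x y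
    exact h x y
  rw [← apply_zpow_of_apply hcongr n (x ⊗ₜ y), TensorProduct.congr_zpow, congr_tmul]

lemma map_zpow_zpow_of_apply {f : W →ₗ[R] V ⊗[R] V'}
    (h : ∀ x, f (d x) = map e.toLinearMap e'.toLinearMap (f x)) (n : ℤ) (x : W) :
    f ((d ^ n) x) = map (e ^ n).toLinearMap (e' ^ n).toLinearMap (f x) := by
  have hcongr (x : W) : f (d x) = TensorProduct.congr e e' (f x) := h x
  rw [apply_zpow_of_apply hcongr, TensorProduct.congr_zpow]
  rfl

lemma map_zpow_map_zpow_cancel {i i' j j' : ℤ} (hi : i + i' = 0) (hj : j + j' = 0)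
    (t : V ⊗[R] V') : map (e ^ i).toLinearMap (e' ^ j).toLinearMap
      (map (e ^ i').toLinearMap (e' ^ j').toLinearMap t) = t := by
  hopf_tensor_induction t with x y
  simp only [map_tmul, LinearEquiv.coe_coe, zpow_zpow_apply, zpow_apply_of_eq_zero hi,
    zpow_apply_of_eq_zero hj]

lemma map_zpow_zpow_injective (i j : ℤ) :
    Function.Injective (map (e ^ i).toLinearMap (e' ^ j).toLinearMap) :=
  Function.LeftInverse.injective
    (map_zpow_map_zpow_cancel (neg_add_cancel i) (neg_add_cancel j))

end Zpow

namespace BiproductData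

variable {R H A : Type*} [CommSemiring R] [AddCommMonoid H] [Module R H]
  [AddCommMonoid A] [Module R A] [Coalgebra R H] [Coalgebra R A]

open Coalgebra

/-- The pair `(α, β)` is an automorphism of the data `X`: it respects the coalgebras `H` and `A`
and every map of `X`. -/
structure IsAut (X : BiproductData R H A) (α : H ≃ₗ[R] H) (β : A ≃ₗ[R] A) : Prop where
  comulH : ∀ h, comul (R := R) (α h) = map α.toLinearMap α.toLinearMap (comul h)
  comulA : ∀ a, comul (R := R) (β a) = map β.toLinearMap β.toLinearMap (comul a)
  counitH : ∀ h, counit (R := R) (α h) = counit (R := R) h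
  counitA : ∀ a, counit (R := R) (β a) = counit (R := R) a
  mulH : ∀ h g, X.mulH (α h ⊗ₜ α g) = α (X.mulH (h ⊗ₜ g))
  mulA : ∀ a b, X.mulA (β a ⊗ₜ β b) = β (X.mulA (a ⊗ₜ b))
  oneH : α X.oneH = X.oneH
  oneA : β X.oneA = X.oneA
  act : ∀ h a, X.act (α h ⊗ₜ β a) = β (X.act (h ⊗ₜ a))
  cocycle : ∀ h g, X.cocycle (α h ⊗ₜ α g) = β (X.cocycle (h ⊗ₜ g))
  coact : ∀ a, X.coact (β a) = map α.toLinearMap β.toLinearMap (X.coact a)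

lemma IsAut.zpow {X : BiproductData R H A} {α : H ≃ₗ[R] H} {β : A ≃ₗ[R] A} (h : X.IsAut α β)
    (n : ℤ) : X.IsAut (α ^ n) (β ^ n) where
  comulH := map_zpow_zpow_of_apply h.comulH n
  comulA := map_zpow_zpow_of_apply h.comulA n
  counitH x := by
    rw [apply_zpow_of_apply (d := (1 : R ≃ₗ[R] R)) h.counitH, one_zpow, LinearEquiv.coe_one, id]
  counitA x := by
    rw [apply_zpow_of_apply (d := (1 : R ≃ₗ[R] R)) h.counitA, one_zpow, LinearEquiv.coe_one, id]
  mulH := apply_zpow_tmul_zpow_of_apply h.mulH n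
  mulA := apply_zpow_tmul_zpow_of_apply h.mulA n
  oneH := zpow_apply_of_fixed h.oneH n
  oneA := zpow_apply_of_fixed h.oneA n
  act := apply_zpow_tmul_zpow_of_apply h.act n
  cocycle := apply_zpow_tmul_zpow_of_apply h.cocycle n
  coact := map_zpow_zpow_of_apply h.coact n

end BiproductData

namespace BiproductData.IsBiproduct

variable {R H A : Type*} [CommSemiring R] [AddCommMonoid H] [Module R H]
  [AddCommMonoid A] [Module R A] [Coalgebra R H]
  {X : BiproductData R H A} {α : H ≃ₗ[R] H} {β : A ≃ₗ[R] A}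

open Coalgebra

lemma crossOne_congr (hX : X.IsBiproduct)
    (hmul : ∀ x y, X.mulB (TensorProduct.congr β α x ⊗ₜ TensorProduct.congr β α y) =
      TensorProduct.congr β α (X.mulB (x ⊗ₜ y)))
    (hα : ∀ h, counit (R := R) (α h) = counit (R := R) h) (hβ : β X.oneA = X.oneA)
    (h : H) (y : A ⊗[R] H) :
    X.crossOne (α h ⊗ₜ TensorProduct.congr β α y) = β (X.crossOne (h ⊗ₜ y)) := by
  have hproj (z : A ⊗[R] H) : projA (TensorProduct.congr β α z) = β (projA z) := by
    hopf_tensor_induction z with a g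
    rw [congr_tmul, projA_tmul, projA_tmul, hα, map_smul]
  rw [← hX.cross_one_tmul, ← hX.cross_one_tmul, ← hX.projA_mulB, ← hX.projA_mulB, ← hproj, ← hmul,
    congr_tmul, hβ]

lemma act_congr (hX : X.IsBiproduct)
    (hmul : ∀ x y, X.mulB (TensorProduct.congr β α x ⊗ₜ TensorProduct.congr β α y) =
      TensorProduct.congr β α (X.mulB (x ⊗ₜ y)))
    (hα : ∀ h, counit (R := R) (α h) = counit (R := R) h) (hα₁ : α X.oneH = X.oneH)
    (hβ₁ : β X.oneA = X.oneA) (h : H) (b : A) :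
    X.act (α h ⊗ₜ β b) = β (X.act (h ⊗ₜ b)) := by
  rw [← hX.crossOne_tmul_oneH, ← hX.crossOne_tmul_oneH, ← hX.crossOne_congr hmul hα hβ₁,
    congr_tmul, hα₁]

lemma cocycle_congr (hX : X.IsBiproduct)
    (hmul : ∀ x y, X.mulB (TensorProduct.congr β α x ⊗ₜ TensorProduct.congr β α y) =
      TensorProduct.congr β α (X.mulB (x ⊗ₜ y)))
    (hα : ∀ h, counit (R := R) (α h) = counit (R := R) h) (hβ₁ : β X.oneA = X.oneA) (h g : H) :
    X.cocycle (α h ⊗ₜ α g) = β (X.cocycle (h ⊗ₜ g)) := by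
  rw [← hX.crossOne_tmul_oneA, ← hX.crossOne_tmul_oneA, ← hX.crossOne_congr hmul hα hβ₁,
    congr_tmul, hβ₁]

end BiproductData.IsBiproduct

section Untwisting

variable {K H A : Type*} [Field K] [AddCommGroup H] [Module K H] [AddCommGroup A] [Module K A]

open Coalgebra BiproductData

/-- The ordinary biproduct data underlying the given monoidal Hom-structures. The powers of the
structure maps are those for which the `(m, k)`-Hom-crossed product and the `m`-Hom-smash coproduct
become the ordinary ones after untwisting. -/
def untwistData (HB : HomBialgebraStr K H) (AA : HomAlgebraStr K A) (act : H →ₗ[K] A →ₗ[K] A)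
    (coact : A →ₗ[K] H ⊗[K] A) (σ : H →ₗ[K] H →ₗ[K] A) (m k : ℤ) : BiproductData K H A where
  mulH := HB.untwistMul
  oneH := HB.one
  mulA := AA.untwistMul
  oneA := AA.one
  act := AA.str.toLinearMap ∘ₗ TensorProduct.lift act ∘ₗ
    map (HB.str ^ (m - 2)).toLinearMap (AA.str ^ (-2 : ℤ)).toLinearMap
  cocycle := AA.str.toLinearMap ∘ₗ TensorProduct.lift σ ∘ₗ
    map (HB.str ^ (k - 1)).toLinearMap (HB.str ^ (k - 1)).toLinearMap
  coact := map (HB.str ^ (m + 1)).toLinearMap AA.str.toLinearMap ∘ₗ coact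

variable {HB : HomBialgebraStr K H} {AA : HomAlgebraStr K A} {AC : HomCoalgebraStr K A}
  {act : H →ₗ[K] A →ₗ[K] A} {coact : A →ₗ[K] H ⊗[K] A} {σ : H →ₗ[K] H →ₗ[K] A} {m k : ℤ}
  {M : HomAlgebraStr K (A ⊗[K] H)}

lemma isBialgebraStr_untwist (HB : HomBialgebraStr K H) :
    IsBialgebraStr HB.untwistMul HB.one HB.toHomCoalgebraStr.untwistComul HB.counit :=
  (isBialgebraStr_untwist_iff (D := HB.toHomCoalgebraStr) rfl).2
    ⟨HB.comul_mul, HB.comul_one, HB.counit_mul, HB.counit_one⟩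

lemma counit_str_zpow (HB : HomBialgebraStr K H) (i : ℤ) (h : H) :
    HB.counit ((HB.str ^ i) h) = HB.counit h := by
  rw [apply_zpow_of_apply (d := (1 : K ≃ₗ[K] K)) HB.counit_str, one_zpow, LinearEquiv.coe_one, id]

lemma untwistData_act_one (hact : IsWeakModuleAlgebra HB AA act) (h : H) :
    (untwistData HB AA act coact σ m k).act (h ⊗ₜ AA.one) = HB.counit h • AA.one := by
  simp only [untwistData, LinearMap.comp_apply, map_tmul, LinearEquiv.coe_coe, lift.tmul,
    zpow_apply_of_fixed AA.str_one, hact.act_one, counit_str_zpow, map_smul, AA.str_one]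

lemma untwistData_coact_str (hstr : AA.str = AC.str) (hcc : IsComoduleCoalgebra HB AC coact)
    (a : A) : (untwistData HB AA act coact σ m k).coact (AA.str a) =
      map HB.str.toLinearMap AA.str.toLinearMap ((untwistData HB AA act coact σ m k).coact a) := by
  simp only [untwistData, LinearMap.comp_apply, hstr, hcc.coact_str]
  hopf_tensor_induction coact a with n w
  simp only [map_tmul, LinearEquiv.coe_coe, apply_eq_zpow_one HB.str, zpow_zpow_apply, add_comm]

variable [Coalgebra K H]

lemma comul_eq_map_str (hH : HB.toHomCoalgebraStr.IsUntwist) (h : H) :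
    comul (R := K) h = map HB.str.toLinearMap HB.str.toLinearMap (HB.comul h) := by
  rw [hH.comul_eq]
  rfl

lemma comul_str (hH : HB.toHomCoalgebraStr.IsUntwist) (h : H) :
    comul (R := K) (HB.str h) = map HB.str.toLinearMap HB.str.toLinearMap (comul h) := by
  rw [hH.comul_eq]
  exact HB.toHomCoalgebraStr.untwistComul_str h

lemma untwistData_coact_coassoc (hH : HB.toHomCoalgebraStr.IsUntwist) (hstr : AA.str = AC.str)
    (hcc : IsComoduleCoalgebra HB AC coact) (a : A) :
    TensorProduct.assoc K H H A
        (map comul LinearMap.id ((untwistData HB AA act coact σ m k).coact a)) =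
      map LinearMap.id (untwistData HB AA act coact σ m k).coact
        ((untwistData HB AA act coact σ m k).coact a) := by
  let τ := (HB.str ^ (m + 2)).toLinearMap
  have hleft (t : H ⊗[K] A) : map τ (map τ (AA.str ^ (2 : ℤ)).toLinearMap)
        (TensorProduct.assoc K H H A (map HB.comul AC.str.symm.toLinearMap t)) =
      TensorProduct.assoc K H H A (map comul LinearMap.id
        (map (HB.str ^ (m + 1)).toLinearMap AA.str.toLinearMap t)) := by
    hopf_tensor_induction t with n w
    simp only [map_tmul, LinearEquiv.coe_coe, map_zpow_zpow_of_apply (comul_str hH),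
      comul_eq_map_str hH n, LinearMap.id_apply, ← hstr]
    hopf_tensor_induction HB.comul n with x y
    simp only [τ, map_tmul, assoc_tmul, LinearEquiv.coe_coe, symm_apply_eq_zpow_neg_one,
      apply_eq_zpow_one HB.str, apply_eq_zpow_one AA.str, zpow_zpow_apply, add_assoc,
      Int.reduceAdd]
  have hright (t : H ⊗[K] A) : map τ (map τ (AA.str ^ (2 : ℤ)).toLinearMap)
        (map HB.str.symm.toLinearMap coact t) =
      map LinearMap.id (untwistData HB AA act coact σ m k).coact
        (map (HB.str ^ (m + 1)).toLinearMap AA.str.toLinearMap t) := by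
    hopf_tensor_induction t with n w
    simp only [map_tmul, LinearEquiv.coe_coe, LinearMap.id_apply,
      untwistData_coact_str hstr hcc, symm_apply_eq_zpow_neg_one, τ]
    simp only [untwistData, LinearMap.comp_apply]
    hopf_tensor_induction coact w with x y
    simp only [map_tmul, LinearEquiv.coe_coe, apply_eq_zpow_one HB.str,
      apply_eq_zpow_one AA.str, zpow_zpow_apply]
    ring_nf
  have h := congr(map τ (map τ (AA.str ^ (2 : ℤ)).toLinearMap) $(hcc.comodule_coassoc a))
  rwa [hleft, hright] at h

lemma untwistData_counit_coact (hH : HB.toHomCoalgebraStr.IsUntwist) (hstr : AA.str = AC.str)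
    (hcc : IsComoduleCoalgebra HB AC coact) (a : A) :
    TensorProduct.lid K A
      (map counit LinearMap.id ((untwistData HB AA act coact σ m k).coact a)) = a := by
  trans AA.str (TensorProduct.lid K A (map HB.counit LinearMap.id (coact a)))
  · rw [hH.counit_eq]
    change TensorProduct.lid K A (map HB.counit LinearMap.id
      (map (HB.str ^ (m + 1)).toLinearMap AA.str.toLinearMap (coact a))) = _
    hopf_tensor_induction coact a with n w
    simp [counit_str_zpow]
  · rw [hcc.counit_coact, ← hstr, LinearEquiv.apply_symm_apply]

lemma cpMulElem_eq_congr_mulB (hH : HB.toHomCoalgebraStr.IsUntwist) (a : A) (h : H) (b : A)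
    (g : H) : cpMulElem HB AA act σ m k a h b g = TensorProduct.congr AA.str HB.str
      ((untwistData HB AA act coact σ m k).mulB ((a ⊗ₜ h) ⊗ₜ (b ⊗ₜ g))) := by
  rw [mulB_tmul, rightCoact_tmul, rightCoact_tmul]
  simp only [cpMulElem, comul_eq_map_str hH]
  hopf_tensor_induction HB.comul h with h₁ h₂
  hopf_tensor_induction HB.comul g with g₁ g₂
  simp only [map_tmul, tensorTensorTensorComm_tmul, assoc_symm_tmul, tensorMul_tmul, cross_tmul,
    crossOne_tmul, LinearEquiv.coe_coe, LinearMap.id_apply, comul_eq_map_str hH, HB.comul_str]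
  hopf_tensor_induction HB.comul h₁ with x y
  have hα (n : ℤ) (z : H) : (HB.str ^ n) (HB.str z) = (HB.str ^ (n + 1)) z := by
    rw [apply_eq_zpow_one HB.str, zpow_zpow_apply]
  simp only [untwistData, LinearMap.comp_apply, LinearEquiv.coe_coe, assoc_tmul, map_tmul,
    LinearMap.flip_apply, lift.tmul, tensorMul_tmul, congr_tmul, HB.untwistMul_tmul,
    AA.untwistMul_tmul, ← HB.str_mul, ← AA.str_mul, LinearEquiv.apply_symm_apply,
    LinearEquiv.symm_apply_apply, Int.reduceNeg, zpow_neg, zpow_ofNat, LinearEquiv.coe_inv, hα,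
    sub_add_cancel]
  ring_nf

lemma untwistMul_eq_mulB (hH : HB.toHomCoalgebraStr.IsUntwist)
    (hMmul : ∀ a h b g, M.mul (a ⊗ₜ h) (b ⊗ₜ g) = cpMulElem HB AA act σ m k a h b g)
    (hMstr : M.str = TensorProduct.congr AA.str HB.str) :
    M.untwistMul = (untwistData HB AA act coact σ m k).mulB := by
  ext a h b g
  apply (TensorProduct.congr AA.str HB.str).injective
  change _ = TensorProduct.congr AA.str HB.str
    ((untwistData HB AA act coact σ m k).mulB ((a ⊗ₜ h) ⊗ₜ (b ⊗ₜ g)))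
  rw [← cpMulElem_eq_congr_mulB hH, ← hMmul, ← hMstr]
  exact (M.mul_eq_str_untwistMul _ _).symm

lemma untwistData_isBiproduct (hH : HB.toHomCoalgebraStr.IsUntwist) (hstr : AA.str = AC.str)
    (hact : IsWeakModuleAlgebra HB AA act) (hcc : IsComoduleCoalgebra HB AC coact)
    (hMmul : M.untwistMul = (untwistData HB AA act coact σ m k).mulB)
    (hMone : M.one = AA.one ⊗ₜ HB.one) : (untwistData HB AA act coact σ m k).IsBiproduct where
  bialgebraH := by
    rw [hH.comul_eq, hH.counit_eq]
    exact isBialgebraStr_untwist HB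
  mulH_one := HB.untwistMul_one
  one_mulH := HB.one_untwistMul
  mulA_one := AA.untwistMul_one
  one_mulA := AA.one_untwistMul
  act_one h := by
    rw [hH.counit_eq]
    exact untwistData_act_one hact h
  mulB_one := hMmul ▸ hMone ▸ M.untwistMul_one
  one_mulB := hMmul ▸ hMone ▸ M.one_untwistMul
  mulB_assoc := hMmul ▸ M.untwistMul_assoc
  coact_coassoc := untwistData_coact_coassoc hH hstr hcc
  counit_coact := untwistData_counit_coact hH hstr hcc

variable [Coalgebra K A]

lemma untwistData_isAut (hH : HB.toHomCoalgebraStr.IsUntwist) (hA : AC.IsUntwist)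
    (hstr : AA.str = AC.str) (hcc : IsComoduleCoalgebra HB AC coact)
    (hX : (untwistData HB AA act coact σ m k).IsBiproduct)
    (hMmul : M.untwistMul = (untwistData HB AA act coact σ m k).mulB)
    (hMstr : M.str = TensorProduct.congr AA.str HB.str) :
    (untwistData HB AA act coact σ m k).IsAut HB.str AA.str := by
  have hmul := M.untwistMul_str
  simp only [hMmul, hMstr] at hmul
  have hcounit (h : H) : counit (R := K) (HB.str h) = counit (R := K) h := by
    rw [hH.counit_eq]
    exact HB.counit_str h
  exact {
    comulH := comul_str hH
    comulA a := by rw [hA.comul_eq, hstr, AC.untwistComul_str]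
    counitH := hcounit
    counitA a := by rw [hA.counit_eq, hstr, AC.counit_str]
    mulH := HB.untwistMul_str
    mulA := AA.untwistMul_str
    oneH := HB.str_one
    oneA := AA.str_one
    act := hX.act_congr hmul hcounit HB.str_one AA.str_one
    cocycle := hX.cocycle_congr hmul hcounit AA.str_one
    coact := untwistData_coact_str hstr hcc }

/-- The data `X` is the untwisting of the given monoidal Hom-structures: those are recovered from
`X` by composing with powers of the structure maps, which are automorphisms of `X`. -/
structure IsUntwisting (HB : HomBialgebraStr K H) (AA : HomAlgebraStr K A)
    (AC : HomCoalgebraStr K A) (act : H →ₗ[K] A →ₗ[K] A) (coact : A →ₗ[K] H ⊗[K] A)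
    (σ : H →ₗ[K] H →ₗ[K] A) (m k : ℤ) (X : BiproductData K H A) : Prop where
  untwistH : HB.toHomCoalgebraStr.IsUntwist
  untwistA : AC.IsUntwist
  str_eq : AC.str = AA.str
  isAut : X.IsAut HB.str AA.str
  mulH_eq : ∀ h g, HB.mul h g = (HB.str ^ (1 : ℤ)) (X.mulH (h ⊗ₜ g))
  mulA_eq : ∀ a b, AA.mul a b = (AA.str ^ (1 : ℤ)) (X.mulA (a ⊗ₜ b))
  oneH_eq : HB.one = X.oneH
  oneA_eq : AA.one = X.oneA
  act_eq : ∀ h b, act h b = (AA.str ^ (1 : ℤ)) (X.act ((HB.str ^ (-m)) h ⊗ₜ b))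
  cocycle_eq : ∀ h g, σ h g = X.cocycle ((HB.str ^ (-k)) h ⊗ₜ (HB.str ^ (-k)) g)
  coact_eq : ∀ a, coact a =
    map (HB.str ^ (-m - 1)).toLinearMap (AA.str ^ (-1 : ℤ)).toLinearMap (X.coact a)

lemma untwistData_isUntwisting (hH : HB.toHomCoalgebraStr.IsUntwist) (hA : AC.IsUntwist)
    (hstr : AA.str = AC.str) (haut : (untwistData HB AA act coact σ m k).IsAut HB.str AA.str) :
    IsUntwisting HB AA AC act coact σ m k (untwistData HB AA act coact σ m k) where
  untwistH := hH
  untwistA := hA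
  str_eq := hstr.symm
  isAut := haut
  mulH_eq h g := by
    rw [zpow_one]
    exact HB.mul_eq_str_untwistMul h g
  mulA_eq a b := by
    rw [zpow_one]
    exact AA.mul_eq_str_untwistMul a b
  oneH_eq := rfl
  oneA_eq := rfl
  act_eq h b := by
    apply (AA.str ^ (1 : ℤ)).injective
    rw [zpow_zpow_apply, ← (haut.zpow (1 + 1)).act, zpow_zpow_apply]
    simp only [untwistData, LinearMap.comp_apply, map_tmul, LinearEquiv.coe_coe, lift.tmul,
      zpow_zpow_apply, ← apply_eq_zpow_one]
    simp (disch := omega) only [zpow_apply_of_eq_zero]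
  cocycle_eq h g := by
    apply AA.str.injective
    rw [← haut.cocycle]
    simp only [untwistData, LinearMap.comp_apply, map_tmul, LinearEquiv.coe_coe, lift.tmul,
      apply_eq_zpow_one HB.str, zpow_zpow_apply]
    simp (disch := omega) only [zpow_apply_of_eq_zero]
  coact_eq a := (map_zpow_map_zpow_cancel (j' := 1) (by ring) rfl _).symm

end Untwisting

section Conditions

variable {K H A : Type*} [Field K] [AddCommGroup H] [Module K H] [AddCommGroup A] [Module K A]
  [Coalgebra K H] [Coalgebra K A] {HB : HomBialgebraStr K H} {AA : HomAlgebraStr K A}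
  {AC : HomCoalgebraStr K A} {act : H →ₗ[K] A →ₗ[K] A} {coact : A →ₗ[K] H ⊗[K] A}
  {σ : H →ₗ[K] H →ₗ[K] A} {m k : ℤ} {X : BiproductData K H A}

open Coalgebra BiproductData

namespace IsUntwisting

lemma comulH_eq (hX : IsUntwisting HB AA AC act coact σ m k X) (h : H) : HB.comul h =
    map (HB.str ^ (-1 : ℤ)).toLinearMap (HB.str ^ (-1 : ℤ)).toLinearMap (comul h) := by
  rw [comul_eq_map_str hX.untwistH]
  exact (map_zpow_map_zpow_cancel (i' := 1) (j' := 1) rfl rfl _).symm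

lemma comulA_eq (hX : IsUntwisting HB AA AC act coact σ m k X) (a : A) : AC.comul a =
    map (AA.str ^ (-1 : ℤ)).toLinearMap (AA.str ^ (-1 : ℤ)).toLinearMap (comul a) := by
  rw [hX.untwistA.comul_eq, AC.untwistComul_apply, hX.str_eq]
  exact (map_zpow_map_zpow_cancel (i' := 1) (j' := 1) rfl rfl _).symm

lemma counitH_eq (hX : IsUntwisting HB AA AC act coact σ m k X) (h : H) :
    HB.counit h = counit (R := K) h := by
  rw [hX.untwistH.counit_eq]
  rfl

lemma counitA_eq (hX : IsUntwisting HB AA AC act coact σ m k X) (a : A) :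
    AC.counit a = counit (R := K) a := by
  rw [hX.untwistA.counit_eq]

lemma counitCompat_iff (hX : IsUntwisting HB AA AC act coact σ m k X) :
    X.CounitCompat ↔ CondA1 AA AC ∧ CondA2 HB AC act ∧
      ∀ h g, AC.counit (σ h g) = HB.counit h * HB.counit g := by
  simp only [CondA1, CondA2, hX.counitA_eq, hX.counitH_eq, hX.mulA_eq, hX.act_eq, hX.cocycle_eq,
    hX.oneA_eq, (hX.isAut.zpow _).counitA]
  constructor
  · intro h
    refine ⟨⟨h.counit_mulA, h.counit_oneA⟩, fun x a ↦ ?_, fun x y ↦ ?_⟩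
    · rw [h.counit_act, (hX.isAut.zpow _).counitH]
    · rw [h.counit_cocycle, (hX.isAut.zpow _).counitH, (hX.isAut.zpow _).counitH]
  · rintro ⟨⟨h₁, h₂⟩, h₃, h₄⟩
    refine ⟨h₁, h₂, fun x a ↦ ?_, fun x y ↦ ?_⟩
    · simpa [zpow_zpow_apply, (hX.isAut.zpow _).counitH] using h₃ ((HB.str ^ m) x) a
    · simpa [zpow_zpow_apply, (hX.isAut.zpow _).counitH] using h₄ ((HB.str ^ k) x) ((HB.str ^ k) y)

lemma unitCompat_iff (hX : IsUntwisting HB AA AC act coact σ m k X) :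
    X.UnitCompat ↔ CondA4 AA AC ∧ coact AA.one = HB.one ⊗ₜ[K] AA.one := by
  have h₁ : X.oneA ⊗ₜ[K] X.oneA = map (AA.str ^ (-1 : ℤ)).toLinearMap
      (AA.str ^ (-1 : ℤ)).toLinearMap (X.oneA ⊗ₜ X.oneA) := by
    simp only [map_tmul, LinearEquiv.coe_coe, (hX.isAut.zpow _).oneA]
  have h₂ : X.oneH ⊗ₜ[K] X.oneA = map (HB.str ^ (-m - 1)).toLinearMap
      (AA.str ^ (-1 : ℤ)).toLinearMap (X.oneH ⊗ₜ X.oneA) := by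
    simp only [map_tmul, LinearEquiv.coe_coe, (hX.isAut.zpow _).oneA, (hX.isAut.zpow _).oneH]
  rw [CondA4, hX.oneA_eq, hX.oneH_eq, hX.comulA_eq, hX.coact_eq, h₁, h₂,
    (map_zpow_zpow_injective _ _).eq_iff, (map_zpow_zpow_injective _ _).eq_iff]
  exact ⟨fun h ↦ ⟨h.1, h.2⟩, fun h ↦ ⟨h.1, h.2⟩⟩

lemma comul_cocycle_iff (hX : IsUntwisting HB AA AC act coact σ m k X) :
    (∀ c, comul (R := K) (X.cocycle c) = map X.cocycle X.cocycle (comul c)) ↔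
      ∀ h g, AC.comul (σ h g) = TensorProduct.map (TensorProduct.lift σ) (TensorProduct.lift σ)
          (TensorProduct.tensorTensorTensorComm K H H H H (HB.comul h ⊗ₜ[K] HB.comul g)) := by
  have e (h g : H) : TensorProduct.map (TensorProduct.lift σ) (TensorProduct.lift σ)
      (TensorProduct.tensorTensorTensorComm K H H H H (HB.comul h ⊗ₜ[K] HB.comul g)) =
      map (AA.str ^ (-1 : ℤ)).toLinearMap (AA.str ^ (-1 : ℤ)).toLinearMap
        (map X.cocycle X.cocycle (comul ((HB.str ^ (-k)) h ⊗ₜ (HB.str ^ (-k)) g))) := by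
    simp only [comul_tmul, hX.comulH_eq, (hX.isAut.zpow _).comulH]
    hopf_tensor_induction comul (R := K) h with h₁ h₂
    hopf_tensor_induction comul (R := K) g with g₁ g₂
    simp only [map_tmul, LinearEquiv.coe_coe, tensorTensorTensorComm_tmul,
      AlgebraTensorModule.tensorTensorTensorComm_tmul, lift.tmul, hX.cocycle_eq,
      ← (hX.isAut.zpow _).cocycle, zpow_zpow_apply, add_comm]
  simp only [e, hX.cocycle_eq, hX.comulA_eq, (map_zpow_zpow_injective _ _).eq_iff]
  refine ⟨fun h _ _ ↦ h _, fun h c ↦ ?_⟩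
  hopf_tensor_induction c with x y
  simpa [zpow_zpow_apply] using h ((HB.str ^ k) x) ((HB.str ^ k) y)

lemma coact_mulA_iff (hX : IsUntwisting HB AA AC act coact σ m k X) :
    (∀ a b, X.coact (X.mulA (a ⊗ₜ b)) =
      tensorMul X.mulH X.mulA (X.coact a ⊗ₜ X.coact b)) ↔
    ∀ a b, coact (AA.mul a b) = map (TensorProduct.lift HB.mul) (TensorProduct.lift AA.mul)
          (TensorProduct.tensorTensorTensorComm K H A H A (coact a ⊗ₜ[K] coact b)) := by
  refine forall₂_congr fun a b ↦ ?_
  have e : map (TensorProduct.lift HB.mul) (TensorProduct.lift AA.mul)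
      (TensorProduct.tensorTensorTensorComm K H A H A (coact a ⊗ₜ[K] coact b)) =
      map (HB.str ^ (-m)).toLinearMap (AA.str ^ (0 : ℤ)).toLinearMap
        (tensorMul X.mulH X.mulA (X.coact a ⊗ₜ X.coact b)) := by
    simp only [hX.coact_eq]
    hopf_tensor_induction X.coact a with x y
    hopf_tensor_induction X.coact b with z w
    simp only [map_tmul, LinearEquiv.coe_coe, tensorTensorTensorComm_tmul, tensorMul_tmul,
      lift.tmul, hX.mulA_eq, hX.mulH_eq, ← (hX.isAut.zpow _).mulA, ← (hX.isAut.zpow _).mulH,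
      zpow_zpow_apply]
    ring_nf
  have e' : coact (AA.mul a b) = map (HB.str ^ (-m)).toLinearMap (AA.str ^ (0 : ℤ)).toLinearMap
      (X.coact (X.mulA (a ⊗ₜ b))) := by
    rw [hX.coact_eq, hX.mulA_eq, (hX.isAut.zpow _).coact]
    hopf_tensor_induction X.coact (X.mulA (a ⊗ₜ b)) with x y
    simp only [map_tmul, LinearEquiv.coe_coe, zpow_zpow_apply]
    ring_nf
  rw [e, e', (map_zpow_zpow_injective _ _).eq_iff]

lemma coactMulAux_coact (hX : IsUntwisting HB AA AC act coact σ m k X) (a : A) (g : H) :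
    coactMulAux HB (m - 1) LinearMap.id (coact ((AA.str ^ (1 : ℤ)) a) ⊗ₜ (HB.str ^ (-1 : ℤ)) g) =
      X.coactMul (X.coact a ⊗ₜ g) := by
  rw [hX.coact_eq, (hX.isAut.zpow _).coact]
  hopf_tensor_induction X.coact a with n w
  simp only [coactMulAux, coactMul_tmul, map_tmul, LinearEquiv.coe_coe, LinearMap.comp_apply,
    assoc_tmul, assoc_symm_tmul, comm_tmul, LinearMap.id_apply, lift.tmul, hX.mulH_eq,
    ← (hX.isAut.zpow _).mulH, zpow_zpow_apply]
  simp (disch := omega) only [zpow_apply_of_eq_zero]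

lemma coact_cocycle_iff (hX : IsUntwisting HB AA AC act coact σ m k X) :
    (∀ c, X.coactMul (map (X.coact ∘ₗ X.cocycle) X.mulH (comul c)) =
      map X.mulH X.cocycle (comul c)) ↔ CondA6 HB coact σ m k := by
  have hleft (h g : H) : coactMulAux HB (m - 1) LinearMap.id
      (map (coact ∘ₗ TensorProduct.lift σ ∘ₗ
          map (HB.str ^ (k + 2)).toLinearMap (HB.str ^ (k + 2)).toLinearMap)
        ((HB.str ^ (-1 : ℤ)).toLinearMap ∘ₗ TensorProduct.lift HB.mul)
        (tensorTensorTensorComm K H H H H (HB.comul h ⊗ₜ HB.comul g))) =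
      X.coactMul (map (X.coact ∘ₗ X.cocycle) X.mulH (comul (h ⊗ₜ g))) := by
    rw [hX.comulH_eq, hX.comulH_eq, comul_tmul]
    hopf_tensor_induction comul (R := K) h with h₁ h₂
    hopf_tensor_induction comul (R := K) g with g₁ g₂
    simp only [map_tmul, LinearEquiv.coe_coe, tensorTensorTensorComm_tmul, LinearMap.comp_apply,
      AlgebraTensorModule.tensorTensorTensorComm_tmul, lift.tmul, hX.cocycle_eq, hX.mulH_eq,
      ← hX.coactMulAux_coact, ← (hX.isAut.zpow _).mulH, ← (hX.isAut.zpow _).cocycle,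
      zpow_zpow_apply]
    ring_nf
  have hright (h g : H) : map (TensorProduct.lift HB.mul)
      (TensorProduct.lift σ ∘ₗ
        map (HB.str ^ (k + 1)).toLinearMap (HB.str ^ (k + 1)).toLinearMap)
      (tensorTensorTensorComm K H H H H (HB.comul h ⊗ₜ HB.comul g)) =
      map X.mulH X.cocycle (comul (h ⊗ₜ g)) := by
    rw [hX.comulH_eq, hX.comulH_eq, comul_tmul]
    hopf_tensor_induction comul (R := K) h with h₁ h₂
    hopf_tensor_induction comul (R := K) g with g₁ g₂
    simp only [map_tmul, LinearEquiv.coe_coe, tensorTensorTensorComm_tmul, LinearMap.comp_apply,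
      AlgebraTensorModule.tensorTensorTensorComm_tmul, lift.tmul, hX.cocycle_eq, zpow_zpow_apply,
      hX.mulH_eq, ← (hX.isAut.zpow _).mulH]
    simp (disch := omega) only [zpow_apply_of_eq_zero]
  simp only [CondA6, hleft, hright]
  refine ⟨fun h _ _ ↦ h _, fun h c ↦ ?_⟩
  hopf_tensor_induction c with x y
  exact h x y

lemma comul_mulA_iff (hX : IsUntwisting HB AA AC act coact σ m k X) :
    (∀ a b, comul (R := K) (X.mulA (a ⊗ₜ b)) =
      tensorMul X.cross X.mulA (X.comulCoact a ⊗ₜ X.comulCoact b)) ↔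
    CondA7 HB AA AC act coact σ m k := by
  refine forall₂_congr fun a b ↦ ?_
  have hcomul : AC.comul (AA.mul a b) = comul (X.mulA (a ⊗ₜ b)) := by
    rw [hX.comulA_eq, hX.mulA_eq, (hX.isAut.zpow _).comulA, map_zpow_map_zpow_cancel rfl rfl]
  rw [hcomul]
  refine Eq.congr_right ?_
  simp only [hX.comulA_eq, comulCoact_apply]
  hopf_tensor_induction comul (R := K) a with a₁ a₂
  simp only [map_tmul, LinearEquiv.coe_coe, LinearMap.id_apply, hX.coact_eq,
    (hX.isAut.zpow _).coact]
  hopf_tensor_induction X.coact a₂ with n a₀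
  hopf_tensor_induction comul (R := K) b with b₁ b₂
  simp only [map_tmul, LinearEquiv.coe_coe, LinearMap.id_apply, hX.coact_eq,
    (hX.isAut.zpow _).coact]
  hopf_tensor_induction X.coact b₂ with l b₀
  simp only [map_tmul, LinearEquiv.coe_coe, tensorTensorTensorComm_tmul, tensorMul_tmul,
    assoc_symm_tmul, cross_tmul, crossOne_tmul, hX.comulH_eq, (hX.isAut.zpow _).comulH]
  hopf_tensor_induction comul (R := K) n with n₁ n₂
  simp only [map_tmul, LinearEquiv.coe_coe, LinearMap.id_apply, LinearMap.comp_apply,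
    tensorTensorTensorComm_tmul, tensorMul_tmul, assoc_tmul, lift.tmul, hX.mulA_eq, hX.act_eq,
    hX.cocycle_eq, apply_eq_zpow_one AA.str, ← (hX.isAut.zpow _).mulA, ← (hX.isAut.zpow _).act,
    ← (hX.isAut.zpow _).cocycle, zpow_zpow_apply]
  simp (disch := omega) only [zpow_apply_of_eq_zero]

lemma comul_act_iff (hX : IsUntwisting HB AA AC act coact σ m k X) :
    (∀ h b, comul (R := K) (X.act (h ⊗ₜ b)) =
      tensorMul X.crossOne X.act (comul h ⊗ₜ X.comulCoact b)) ↔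
    CondA8 HB AA AC act coact σ m k := by
  refine forall₂_congr fun h b ↦ ?_
  have hcomul : AC.comul (act ((HB.str ^ m) h) b) = comul (X.act (h ⊗ₜ b)) := by
    rw [hX.comulA_eq, hX.act_eq, (hX.isAut.zpow _).comulA, map_zpow_map_zpow_cancel rfl rfl,
      zpow_zpow_apply, zpow_apply_of_eq_zero (neg_add_cancel m)]
  rw [hcomul]
  refine Eq.congr_right ?_
  simp only [hX.comulA_eq, hX.comulH_eq h, comulCoact_apply]
  hopf_tensor_induction comul (R := K) b with b₁ b₂
  simp only [map_tmul, LinearEquiv.coe_coe, LinearMap.id_apply, hX.coact_eq,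
    (hX.isAut.zpow _).coact]
  hopf_tensor_induction X.coact b₂ with l b₀
  hopf_tensor_induction comul (R := K) h with h₁ h₂
  simp only [map_tmul, LinearEquiv.coe_coe, LinearMap.id_apply, tensorTensorTensorComm_tmul,
    tensorMul_tmul, assoc_symm_tmul, crossOne_tmul, hX.comulH_eq, (hX.isAut.zpow _).comulH]
  hopf_tensor_induction comul (R := K) h₁ with n₁ n₂
  simp only [map_tmul, LinearEquiv.coe_coe, LinearMap.comp_apply, tensorTensorTensorComm_tmul,
    tensorMul_tmul, lift.tmul, hX.mulA_eq, hX.act_eq, hX.cocycle_eq, apply_eq_zpow_one AA.str,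
    ← (hX.isAut.zpow _).mulA, ← (hX.isAut.zpow _).act, ← (hX.isAut.zpow _).cocycle,
    zpow_zpow_apply]
  simp (disch := omega) only [zpow_apply_of_eq_zero]

lemma coact_act_iff (hX : IsUntwisting HB AA AC act coact σ m k X) :
    (∀ h b, X.coactAct (comul h ⊗ₜ b) = tensorMul X.mulH X.act (comul h ⊗ₜ X.coact b)) ↔
      CondA9 HB act coact m := by
  refine forall₂_congr fun h b ↦ ?_
  have hleft : X.coactAct (comul h ⊗ₜ b) = coactMulAux HB (m - 1) LinearMap.id
      (map (coact ∘ₗ act.flip b ∘ₗ (HB.str ^ (m + 1)).toLinearMap) LinearMap.id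
        (HB.comul h)) := by
    rw [hX.comulH_eq]
    hopf_tensor_induction comul (R := K) h with h₁ h₂
    simp only [map_tmul, LinearEquiv.coe_coe, LinearMap.id_apply, LinearMap.comp_apply,
      LinearMap.flip_apply, coactAct_tmul, hX.act_eq, zpow_zpow_apply, hX.coactMulAux_coact]
    rw [zpow_apply_of_eq_zero (by ring)]
  rw [hleft, hX.comulH_eq, hX.coact_eq]
  refine Eq.congr_right ?_
  hopf_tensor_induction comul (R := K) h with h₁ h₂
  hopf_tensor_induction X.coact b with l b₀
  simp only [map_tmul, LinearEquiv.coe_coe, LinearMap.id_apply, LinearMap.comp_apply,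
    tensorTensorTensorComm_tmul, tensorMul_tmul, lift.tmul, hX.mulH_eq, hX.act_eq,
    ← (hX.isAut.zpow _).mulH, ← (hX.isAut.zpow _).act, zpow_zpow_apply]
  simp (disch := omega) only [zpow_apply_of_eq_zero]

lemma conditions_iff (hX : IsUntwisting HB AA AC act coact σ m k X) :
    (X.CounitCompat ∧ X.UnitCompat ∧ X.MulCompat) ↔
      (CondA1 AA AC ∧ CondA2 HB AC act ∧ CondA3 HB AC σ ∧ CondA4 AA AC
        ∧ CondA5 HB AA coact ∧ CondA6 HB coact σ m k
        ∧ CondA7 HB AA AC act coact σ m k ∧ CondA8 HB AA AC act coact σ m k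
        ∧ CondA9 HB act coact m) := by
  rw [hX.counitCompat_iff, hX.unitCompat_iff, CondA3, CondA5]
  constructor
  · rintro ⟨⟨h₁, h₂, h₃⟩, ⟨h₄, h₅⟩, h⟩
    exact ⟨h₁, h₂, ⟨hX.comul_cocycle_iff.1 h.comul_cocycle, h₃⟩, h₄,
      ⟨hX.coact_mulA_iff.1 h.coact_mulA, h₅⟩, hX.coact_cocycle_iff.1 h.coact_cocycle,
      hX.comul_mulA_iff.1 h.comul_mulA, hX.comul_act_iff.1 h.comul_act,
      hX.coact_act_iff.1 h.coact_act⟩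
  · rintro ⟨h₁, h₂, ⟨h₃, h₃'⟩, h₄, ⟨h₅, h₅'⟩, h₆, h₇, h₈, h₉⟩
    exact ⟨⟨h₁, h₂, h₃'⟩, ⟨h₄, h₅'⟩, hX.comul_cocycle_iff.2 h₃, hX.coact_mulA_iff.2 h₅,
      hX.coact_cocycle_iff.2 h₆, hX.comul_mulA_iff.2 h₇, hX.comul_act_iff.2 h₈,
      hX.coact_act_iff.2 h₉⟩

lemma isTwisted (hX : IsUntwisting HB AA AC act coact σ m k X) (hB : X.IsBiproduct)
    (h : IsTwistedCocycle HB AA AC coact σ m k) : X.IsTwisted := by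
  intro a g
  apply map_zpow_zpow_injective (e := TensorProduct.congr AA.str HB.str) (e' := AA.str) 0 (-2)
  have htwist := h a ((HB.str ^ (-1 : ℤ)) g)
  rw [hX.comulA_eq, hX.comulH_eq, (hX.isAut.zpow _).comulH] at htwist
  simp only [comulCoact_apply]
  convert htwist.symm using 1
  · hopf_tensor_induction comul (R := K) a with a₁ a₂
    simp only [map_tmul, LinearEquiv.coe_coe, LinearMap.id_apply, hX.coact_eq,
      (hX.isAut.zpow _).coact]
    hopf_tensor_induction X.coact a₂ with n a₀
    simp only [map_tmul, LinearEquiv.coe_coe, LinearMap.id_apply, LinearMap.comp_apply,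
      assoc_symm_tmul, LinearMap.flip_apply, mk_apply, mulB_tmul, rightCoact_tmul, hX.comulH_eq,
      (hX.isAut.zpow _).comulH]
    hopf_tensor_induction comul (R := K) n with n₁ n₂
    hopf_tensor_induction comul (R := K) g with g₁ g₂
    simp only [map_tmul, LinearEquiv.coe_coe, LinearMap.id_apply, LinearMap.comp_apply,
      assoc_tmul, assoc_symm_tmul, comm_tmul, tensorTensorTensorComm_tmul, tensorMul_tmul,
      zpow_zero, LinearEquiv.coe_one, id_eq, cross_tmul, hB.crossOne_tmul_oneA,
      lift.tmul, hX.mulA_eq, hX.mulH_eq, hX.cocycle_eq, apply_eq_zpow_one HB.str,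
      ← (hX.isAut.zpow _).mulA, ← (hX.isAut.zpow _).mulH, ← (hX.isAut.zpow _).cocycle,
      zpow_zpow_apply]
    simp (disch := omega) only [zpow_apply_of_eq_zero]
    rfl
  · hopf_tensor_induction comul (R := K) a with a₁ a₂
    simp only [map_tmul, LinearEquiv.coe_coe, LinearMap.id_apply, hX.coact_eq,
      (hX.isAut.zpow _).coact]
    hopf_tensor_induction X.coact a₂ with n a₀
    simp only [map_tmul, LinearEquiv.coe_coe, LinearMap.id_apply, LinearMap.comp_apply,
      assoc_symm_tmul, LinearMap.flip_apply, mk_apply, zpow_zero, LinearEquiv.coe_one, id_eq,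
      mulRight_tmul, hX.mulH_eq, apply_eq_zpow_one AA.str, ← (hX.isAut.zpow _).mulH,
      zpow_zpow_apply]
    simp (disch := omega) only [zpow_apply_of_eq_zero]
    rfl

lemma comulB_tmul_eq (hX : IsUntwisting HB AA AC act coact σ m k X) (a : A) (h : H) :
    X.comulB (a ⊗ₜ h) = map (TensorProduct.congr AA.str HB.str).toLinearMap
      (TensorProduct.congr AA.str HB.str).toLinearMap (scComulElem HB AC coact m a h) := by
  rw [comulB_tmul, scComulElem, hX.comulA_eq, hX.comulH_eq, comulCoact_apply]
  hopf_tensor_induction comul (R := K) a with a₁ a₂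
  hopf_tensor_induction comul (R := K) h with h₁ h₂
  simp only [map_tmul, LinearEquiv.coe_coe, LinearMap.id_apply, hX.coact_eq,
    (hX.isAut.zpow _).coact]
  hopf_tensor_induction X.coact a₂ with n a₀
  simp only [map_tmul, LinearEquiv.coe_coe, LinearMap.id_apply, LinearMap.comp_apply,
    assoc_tmul, assoc_symm_tmul, tensorTensorTensorComm_tmul, tensorMul_tmul, mulRight_tmul,
    lift.tmul, congr_tmul, hX.str_eq, hX.mulH_eq, apply_eq_zpow_one AA.str,
    apply_eq_zpow_one HB.str, ← (hX.isAut.zpow _).mulH, zpow_zpow_apply]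
  simp (disch := omega) only [zpow_apply_of_eq_zero]

variable {D : HomCoalgebraStr K (A ⊗[K] H)}

lemma untwistComul_eq_comulB (hX : IsUntwisting HB AA AC act coact σ m k X)
    (hDcomul : ∀ a h, D.comul (a ⊗ₜ h) = scComulElem HB AC coact m a h)
    (hDstr : D.str = TensorProduct.congr AC.str HB.str) : D.untwistComul = X.comulB := by
  ext a h
  change D.untwistComul (a ⊗ₜ h) = X.comulB (a ⊗ₜ h)
  rw [hX.comulB_tmul_eq, D.untwistComul_apply, hDcomul, hDstr, hX.str_eq]

lemma counit_eq_counit (hX : IsUntwisting HB AA AC act coact σ m k X)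
    (hDcounit : ∀ a h, D.counit (a ⊗ₜ h) = AC.counit a * HB.counit h) :
    D.counit = counit (R := K) (A := A ⊗[K] H) := by
  ext a h
  change D.counit (a ⊗ₜ h) = counit (R := K) (a ⊗ₜ[K] h)
  rw [hDcounit, hX.counitA_eq, hX.counitH_eq, counit_tmul, smul_eq_mul, mul_comm]

end IsUntwisting

end Conditions

/-- Theorem 3.3: the crossed product / smash coproduct structure on `A ⊗ H` is a monoidal
Hom-bialgebra if and only if conditions (A1)–(A9) hold. -/
theorem radford_biproduct_bialgebra_iff
    {K H A : Type*} [Field K] [AddCommGroup H] [Module K H] [AddCommGroup A] [Module K A]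
    (HB : HomBialgebraStr K H) (AA : HomAlgebraStr K A) (AC : HomCoalgebraStr K A)
    (hstr : AA.str = AC.str)
    (act : H →ₗ[K] A →ₗ[K] A) (hact : IsWeakModuleAlgebra HB AA act)
    (coact : A →ₗ[K] H ⊗[K] A) (hcc : IsComoduleCoalgebra HB AC coact)
    (σ : H →ₗ[K] H →ₗ[K] A) (m k : ℤ)
    (M : HomAlgebraStr K (A ⊗[K] H))
    (hMmul : ∀ (a : A) (h : H) (b : A) (g : H),
      M.mul (a ⊗ₜ[K] h) (b ⊗ₜ[K] g) = cpMulElem HB AA act σ m k a h b g)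
    (hMone : M.one = AA.one ⊗ₜ[K] HB.one)
    (hMstr : M.str = TensorProduct.congr AA.str HB.str)
    (hcoc : IsTwistedCocycle HB AA AC coact σ m k)
    (D : HomCoalgebraStr K (A ⊗[K] H))
    (hDcomul : ∀ (a : A) (h : H), D.comul (a ⊗ₜ[K] h) = scComulElem HB AC coact m a h)
    (hDcounit : ∀ (a : A) (h : H), D.counit (a ⊗ₜ[K] h) = AC.counit a * HB.counit h)
    (hDstr : D.str = TensorProduct.congr AC.str HB.str) :
    (∃ B : HomBialgebraStr K (A ⊗[K] H),
        B.mul = M.mul ∧ B.one = M.one ∧ B.comul = D.comul ∧ B.counit = D.counit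
          ∧ B.str = M.str)
    ↔ (CondA1 AA AC ∧ CondA2 HB AC act ∧ CondA3 HB AC σ ∧ CondA4 AA AC
        ∧ CondA5 HB AA coact ∧ CondA6 HB coact σ m k
        ∧ CondA7 HB AA AC act coact σ m k ∧ CondA8 HB AA AC act coact σ m k
        ∧ CondA9 HB act coact m) := by
  let _ := HB.toHomCoalgebraStr.untwist
  let _ := AC.untwist
  have hH : HB.toHomCoalgebraStr.IsUntwist := ⟨rfl, rfl⟩
  have hA : AC.IsUntwist := ⟨rfl, rfl⟩
  have hMD : M.str = D.str := by rw [hMstr, hDstr, hstr]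
  have hM : M.untwistMul = (untwistData HB AA act coact σ m k).mulB :=
    untwistMul_eq_mulB hH hMmul hMstr
  have hB : (untwistData HB AA act coact σ m k).IsBiproduct :=
    untwistData_isBiproduct hH hstr hact hcc hM hMone
  have hX : IsUntwisting HB AA AC act coact σ m k (untwistData HB AA act coact σ m k) :=
    untwistData_isUntwisting hH hA hstr (untwistData_isAut hH hA hstr hcc hB hM hMstr)
  rw [← hX.conditions_iff, ← hB.isBialgebraStr_iff (hX.isTwisted hB hcoc),
    exists_homBialgebraStr_iff hMD, hM, hMone, hX.untwistComul_eq_comulB hDcomul hDstr,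
    hX.counit_eq_counit hDcounit]
  rfl
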